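/- arXiv:2001.01657 — 2 statements merged into one kernel-verified Lean document; each statement's English description precedes it below -/
import Mathlib

section
/- Let Ω₁, Ω₂ ⊆ ℝ² be open and let f : Ω₁ → Ω₂ be a homeomorphism. Then f⁻¹ ∈ W^{1,∞}(Ω₂, Ω₁) if and only if f ∈ BV_loc(Ω₁, Ω₂) and there exists a constant K > 0 such that |Df|(f⁻¹(A)) ≤ K·L²(A) for all Borel sets A ⊆ Ω₂. -/
/-!
Suppose first that `g = f⁻¹` is locally `L`-Lipschitz. Writing `∂ₑφ` as a difference quotient and
shifting it onto `f_j`, the pairing `∫ f_j ∂ₑφ` is controlled by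
`h⁻¹ ∫ |φ(x)| |f_j(x + he) - f_j(x)| dx`. The last integral is the area, weighted by `|φ|`, of the
region between the graphs of `f_j(· + he)` and `f_j`. Along each segment `[x, x + he]` the function
`f_j` takes all intermediate values, so this region is covered by the image of the Lipschitz map
`(y, τ) ↦ (g y - τe, y_j)` on `Ω₂ × [0, h]`. Hence the pairing is at most a constant times
`∫_{Ω₂} |φ ∘ g|`, and by duality `|Df|` is dominated by a multiple of the image of Lebesgue measure
under `g`.

Conversely, let the variation bound hold, and let `y, z` be at distance `r`, well inside `Ω₂`.
If `g y` and `g z` differ by `d` in one coordinate, then by connectedness a set of measure `d` of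
lines in the other coordinate direction meets `g (closedBall y r)`, and before they leave
`g (closedBall y (3 * r))` the map `f` oscillates by at least `2 * r` along each of them. By Fubini,
`r * d` is bounded by a multiple of `|Df| (f⁻¹ (ball y (4 * r)))`, hence of `K * r ^ 2`.
-/

open MeasureTheory Metric Set Filter
open scoped ENNReal Topology NNReal

noncomputable section

/-- `ℝⁿ` as a Euclidean space. -/
abbrev En (n : ℕ) : Type := EuclideanSpace ℝ (Fin n)

/-- A smooth test function compactly supported inside the set `Ω`. -/
def SmoothTest {n : ℕ} (Ω : Set (En n)) (φ : En n → ℝ) : Prop :=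
  ContDiff ℝ (⊤ : ℕ∞) φ ∧ HasCompactSupport φ ∧ tsupport φ ⊆ Ω

/-- Frobenius norm of an `m × n` array of reals. -/
def frobNorm {m n : ℕ} (M : Fin m → Fin n → ℝ) : ℝ :=
  Real.sqrt (∑ j, ∑ i, M j i ^ 2)

/-- `Df = σ ⬝ ν` is the polar decomposition of the distributional derivative of the
mapping `f : Ω → ℝᵐ`: `σ` is a matrix field of unit Frobenius norm `ν`-a.e., `ν` is
carried by `Ω`, and the integration-by-parts formula holds against all smooth test
functions compactly supported in `Ω`.  In particular `ν = |Df|` is the total variation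
measure of `Df` on `Ω`. -/
def IsVariationMeasure {n m : ℕ} (Ω : Set (En n)) (f : En n → En m)
    (σ : En n → Fin m → Fin n → ℝ) (ν : Measure (En n)) : Prop :=
  Measurable σ ∧ (∀ᵐ x ∂ν, frobNorm (σ x) = 1) ∧ ν Ωᶜ = 0 ∧
    ∀ φ : En n → ℝ, SmoothTest Ω φ → ∀ (j : Fin m) (i : Fin n),
      ∫ x in Ω, f x j * fderiv ℝ φ x (EuclideanSpace.single i 1) ∂volume
        = - ∫ x, φ x * σ x j i ∂ν

/-- `f ∈ BV(Ω, ℝᵐ)` with total variation measure `ν`. -/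
def MemBV {n m : ℕ} (Ω : Set (En n)) (f : En n → En m) (ν : Measure (En n)) : Prop :=
  IntegrableOn f Ω volume ∧ ν Ω < ⊤ ∧ ∃ σ, IsVariationMeasure Ω f σ ν

/-- `f ∈ BV_loc(Ω, ℝᵐ)` with total variation measure `ν`, finite on compact subsets of `Ω`. -/
def MemBVloc {n m : ℕ} (Ω : Set (En n)) (f : En n → En m) (ν : Measure (En n)) : Prop :=
  LocallyIntegrableOn f Ω volume ∧ (∀ C : Set (En n), IsCompact C → C ⊆ Ω → ν C < ⊤) ∧
    ∃ σ, IsVariationMeasure Ω f σ ν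

/-- Scalar version of `IsVariationMeasure`: `Du = σ ⬝ ν` with `|σ| = 1` `ν`-a.e. -/
def IsVariationMeasureS {n : ℕ} (Ω : Set (En n)) (u : En n → ℝ)
    (σ : En n → Fin n → ℝ) (ν : Measure (En n)) : Prop :=
  Measurable σ ∧ (∀ᵐ x ∂ν, Real.sqrt (∑ i, σ x i ^ 2) = 1) ∧ ν Ωᶜ = 0 ∧
    ∀ φ : En n → ℝ, SmoothTest Ω φ → ∀ i : Fin n,
      ∫ x in Ω, u x * fderiv ℝ φ x (EuclideanSpace.single i 1) ∂volume
        = - ∫ x, φ x * σ x i ∂ν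

/-- `u ∈ BV(Ω)` with total variation measure `ν`. -/
def MemBVs {n : ℕ} (Ω : Set (En n)) (u : En n → ℝ) (ν : Measure (En n)) : Prop :=
  IntegrableOn u Ω volume ∧ ν Ω < ⊤ ∧ ∃ σ, IsVariationMeasureS Ω u σ ν

/-- `u ∈ BV_loc(Ω)` with total variation measure `ν`. -/
def MemBVlocs {n : ℕ} (Ω : Set (En n)) (u : En n → ℝ) (ν : Measure (En n)) : Prop :=
  LocallyIntegrableOn u Ω volume ∧ (∀ C : Set (En n), IsCompact C → C ⊆ Ω → ν C < ⊤) ∧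
    ∃ σ, IsVariationMeasureS Ω u σ ν

/-- `z` is the approximate limit of `f` at `x`. -/
def ApproxLimAt {n m : ℕ} (f : En n → En m) (x : En n) (z : En m) : Prop :=
  Tendsto (fun r : ℝ =>
      (∫ y in Metric.ball x r, ‖f y - z‖ ∂volume) / (volume (Metric.ball x r)).toReal)
    (nhdsWithin 0 (Set.Ioi 0)) (nhds 0)

/-- `f̃⁻¹(A)`: the preimage of `A` under the precise representative (approximate limit)
of `f`; a point belongs to it iff the approximate limit of `f` exists there and lies in `A`. -/
def tildePreimage {n m : ℕ} (f : En n → En m) (A : Set (En m)) : Set (En n) :=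
  {x | ∃ z ∈ A, ApproxLimAt f x z}

/-- `f` has no jump part: its variation measure does not charge the approximate
discontinuity set of `f`. -/
def NoJumpPart {n m : ℕ} (f : En n → En m) (ν : Measure (En n)) : Prop :=
  ν {x | ¬ ∃ z, ApproxLimAt f x z} = 0

/-- `f` is a homeomorphism of `Ω₁` onto `Ω₂`, with inverse `g`. -/
def IsHomeoOn {n : ℕ} (f g : En n → En n) (Ω₁ Ω₂ : Set (En n)) : Prop :=
  ContinuousOn f Ω₁ ∧ ContinuousOn g Ω₂ ∧ MapsTo f Ω₁ Ω₂ ∧ MapsTo g Ω₂ Ω₁ ∧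
    (∀ x ∈ Ω₁, g (f x) = x) ∧ (∀ y ∈ Ω₂, f (g y) = y)

section Duality

theorem exists_strongDual_comp_eq {V E : Type*} [AddCommGroup V] [Module ℝ V]
    [NormedAddCommGroup E] [NormedSpace ℝ E] (T : V →ₗ[ℝ] E) (Λ : V →ₗ[ℝ] ℝ) (M : ℝ≥0)
    (hΛ : ∀ v, ‖Λ v‖ ≤ M * ‖T v‖) :
    ∃ l : StrongDual ℝ E, ‖l‖ ≤ M ∧ ∀ v, l (T v) = Λ v := by
  have hker : LinearMap.ker T.rangeRestrict ≤ LinearMap.ker Λ := fun v hv => by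
    rw [LinearMap.ker_rangeRestrict, LinearMap.mem_ker] at hv
    simpa [hv] using hΛ v
  obtain ⟨l₀, rfl⟩ : ∃ l₀ : T.range →ₗ[ℝ] ℝ, l₀ ∘ₗ T.rangeRestrict = Λ := by
    have : Λ ∈ LinearMap.range (T.rangeRestrict).dualMap := by
      rw [LinearMap.range_dualMap_eq_dualAnnihilator_ker, Submodule.mem_dualAnnihilator]
      exact fun v hv => hker hv
    exact this
  have hl₀ : ∀ w, ‖l₀ w‖ ≤ M * ‖w‖ := by
    rintro ⟨_, v, rfl⟩
    exact hΛ v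
  obtain ⟨l, hl, hnorm⟩ := exists_extension_norm_eq T.range (l₀.mkContinuous M hl₀)
  exact ⟨l, hnorm.trans_le (LinearMap.mkContinuous_norm_le _ M.2 _),
    fun v => hl (T.rangeRestrict v)⟩

variable {α : Type*} [MeasurableSpace α] {μ : Measure α}

theorem exists_strongDual_forall_eq_integral {s : α → ℝ} (hs : MemLp s ∞ μ) :
    ∃ m : StrongDual ℝ (Lp ℝ 1 μ), ∀ v, m v = ∫ x, v x * s x ∂μ := by
  refine ⟨((ContinuousLinearMap.mul ℝ ℝ).lpPairing μ ∞ 1 hs.toLp), fun v => ?_⟩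
  refine (ContinuousLinearMap.lpPairing_eq_integral _ _ _).trans (integral_congr_ae ?_)
  filter_upwards [hs.coeFn_toLp] with x hx
  simp [hx, mul_comm]

theorem exists_integrable_forall_setIntegral_eq [IsFiniteMeasure μ] (l : StrongDual ℝ (Lp ℝ 1 μ)) :
    ∃ r : α → ℝ, Integrable r μ ∧ ∀ A (hA : MeasurableSet A) (c : ℝ),
      l (indicatorConstLp 1 hA (measure_ne_top μ A) c) = c * ∫ x in A, r x ∂μ := by
  -- Since `μ` is finite, `J` embeds `L²` into `L¹`, and the Riesz theorem represents `l ∘ J`.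
  let J : Lp ℝ 2 μ →L[ℝ] Lp ℝ 1 μ :=
    (ContinuousLinearMap.lsmul ℝ ℝ : ℝ →L[ℝ] ℝ →L[ℝ] ℝ).holderL μ 2 2 1
      (indicatorConstLp 2 .univ (measure_ne_top μ univ) 1)
  let r : Lp ℝ 2 μ := (InnerProductSpace.toDual ℝ (Lp ℝ 2 μ)).symm (l ∘L J)
  refine ⟨r, (Lp.memLp r).integrable one_le_two, fun A hA c => ?_⟩
  have hJ : J (indicatorConstLp 2 hA (measure_ne_top μ A) c) =
      indicatorConstLp 1 hA (measure_ne_top μ A) c := by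
    refine Lp.ext ?_
    filter_upwards [(ContinuousLinearMap.lsmul ℝ ℝ : ℝ →L[ℝ] ℝ →L[ℝ] ℝ).coeFn_holder (r := 1)
        (indicatorConstLp 2 .univ (measure_ne_top μ univ) 1)
        (indicatorConstLp 2 hA (measure_ne_top μ A) c),
      indicatorConstLp_coeFn (p := 2) (hs := .univ) (hμs := measure_ne_top μ univ) (c := (1 : ℝ)),
      indicatorConstLp_coeFn (p := 2) (hs := hA) (hμs := measure_ne_top μ A) (c := c),
      indicatorConstLp_coeFn (p := 1) (hs := hA) (hμs := measure_ne_top μ A) (c := c)]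
      with x hmul hone h2 h1
    rw [h1, ← h2]
    refine hmul.trans ?_
    rw [hone]
    simp
  calc l (indicatorConstLp 1 hA (measure_ne_top μ A) c)
      = inner ℝ r (indicatorConstLp 2 hA (measure_ne_top μ A) c) := by
        rw [InnerProductSpace.toDual_symm_apply, ← hJ]; rfl
    _ = c * ∫ x in A, r x ∂μ := by
        rw [real_inner_comm, L2.inner_indicatorConstLp_eq_inner_setIntegral ℝ hA]
        simp [mul_comm]

theorem ae_abs_le_of_forall_abs_setIntegral_le [IsFiniteMeasure μ] {r : α → ℝ} {M : ℝ}
    (hr : Integrable r μ) (h : ∀ A, MeasurableSet A → |∫ x in A, r x ∂μ| ≤ M * μ.real A) :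
    ∀ᵐ x ∂μ, |r x| ≤ M := by
  have hle : ∀ᵐ x ∂μ, r x ≤ M := by
    refine ae_le_of_forall_setIntegral_le hr (integrable_const M) fun A hA _ => ?_
    rw [setIntegral_const, smul_eq_mul, mul_comm]
    exact (abs_le.1 (h A hA)).2
  have hge : ∀ᵐ x ∂μ, -M ≤ r x := by
    refine ae_le_of_forall_setIntegral_le (integrable_const _) hr fun A hA _ => ?_
    rw [setIntegral_const, smul_eq_mul, mul_neg, mul_comm]
    exact (abs_le.1 (h A hA)).1
  filter_upwards [hle, hge] with x hx hx' using abs_le.2 ⟨hx', hx⟩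

theorem exists_measurable_abs_le_ae_eq {r : α → ℝ} {M : ℝ≥0} (hr : AEStronglyMeasurable r μ)
    (h : ∀ᵐ x ∂μ, |r x| ≤ M) : ∃ s : α → ℝ, Measurable s ∧ (∀ x, |s x| ≤ M) ∧ r =ᵐ[μ] s := by
  refine ⟨fun x => max (-M) (min M (hr.mk r x)), by fun_prop, fun x => ?_, ?_⟩
  · exact abs_le.2 ⟨le_max_left _ _, max_le (by simp) (min_le_left _ _)⟩
  · filter_upwards [hr.ae_eq_mk, h] with x hx hM
    rw [← hx, min_eq_right (abs_le.1 hM).2, max_eq_right (abs_le.1 hM).1]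

theorem exists_density_of_strongDual_of_isFiniteMeasure [IsFiniteMeasure μ]
    (l : StrongDual ℝ (Lp ℝ 1 μ)) :
    ∃ s : α → ℝ, Measurable s ∧ (∀ x, |s x| ≤ ‖l‖) ∧ ∀ v, l v = ∫ x, v x * s x ∂μ := by
  obtain ⟨r, hr, hl⟩ := exists_integrable_forall_setIntegral_eq l
  have hr_bound : ∀ A, MeasurableSet A → |∫ x in A, r x ∂μ| ≤ ‖l‖ * μ.real A := fun A hA => by
    have h := l.le_opNorm (indicatorConstLp 1 hA (measure_ne_top μ A) 1)
    rwa [hl A hA, norm_indicatorConstLp one_ne_zero ENNReal.one_ne_top, one_mul, norm_one, one_mul,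
      ENNReal.toReal_one, div_one, Real.rpow_one] at h
  obtain ⟨s, hs, hsl, hrs⟩ := exists_measurable_abs_le_ae_eq (M := ‖l‖₊) hr.1
    (ae_abs_le_of_forall_abs_setIntegral_le hr hr_bound)
  obtain ⟨m, hm⟩ := exists_strongDual_forall_eq_integral
    (memLp_top_of_bound hs.aestronglyMeasurable _ (ae_of_all μ hsl))
  refine ⟨s, hs, hsl, fun v => ?_⟩
  rw [← hm]
  refine Lp.induction ENNReal.one_ne_top (motive := fun v => l v = m v) ?_ ?_
    (isClosed_eq l.continuous m.continuous) v
  · intro c A hA hμA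
    have hind : ∀ᵐ x ∂μ, indicatorConstLp 1 hA hμA.ne c x * s x
        = A.indicator (fun x => c * s x) x := by
      filter_upwards [indicatorConstLp_coeFn (p := 1) (hs := hA) (hμs := hμA.ne) (c := c)] with x hx
      rw [hx, indicator_mul_left]
    rw [Lp.simpleFunc.coe_indicatorConst, hl, hm, integral_congr_ae hind, integral_indicator hA,
      integral_const_mul, setIntegral_congr_ae hA (hrs.mono fun x hx _ => hx)]
  · intro f g hf hg _ hlf hlg
    rw [map_add, map_add, hlf, hlg]

theorem withDensitySMulLI_surjective {w : α → ℝ≥0} (hw : Measurable w) (hw₀ : ∀ x, w x ≠ 0) :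
    Function.Surjective (withDensitySMulLI (E := ℝ) μ hw) := fun v => by
  have hwv : ∀ x, w x • ((w x)⁻¹ • v x) = v x := fun x => smul_inv_smul₀ (hw₀ x) _
  have hint : MemLp (fun x => (w x)⁻¹ • v x) 1 (μ.withDensity fun x => w x) := by
    rw [memLp_one_iff_integrable, integrable_withDensity_iff_integrable_smul hw]
    simpa only [hwv] using L1.integrable_coeFn v
  refine ⟨hint.toLp, Lp.ext ?_⟩
  rw [withDensitySMulLI_apply]
  filter_upwards [(memL1_smul_of_L1_withDensity hw hint.toLp).coeFn_toLp,
    (ae_withDensity_iff hw.coe_nnreal_ennreal).1 hint.coeFn_toLp] with x hx hx'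
  rw [hx, hx' (by simpa using hw₀ x), hwv]

theorem exists_density_of_strongDual [SigmaFinite μ] (l : StrongDual ℝ (Lp ℝ 1 μ)) :
    ∃ s : α → ℝ, Measurable s ∧ (∀ x, |s x| ≤ ‖l‖) ∧ ∀ v, l v = ∫ x, v x * s x ∂μ := by
  obtain ⟨w, hw₀, hw, hw_int⟩ := exists_pos_lintegral_lt_of_sigmaFinite μ one_ne_zero
  have : IsFiniteMeasure (μ.withDensity fun x => w x) :=
    isFiniteMeasure_withDensity (hw_int.trans ENNReal.one_lt_top).ne
  let I := withDensitySMulLI (E := ℝ) μ hw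
  obtain ⟨s, hs, hsl, hl⟩ := exists_density_of_strongDual_of_isFiniteMeasure
    (l ∘L I.toContinuousLinearMap)
  refine ⟨s, hs, fun x => (hsl x).trans ?_, fun v => ?_⟩
  · refine (l.opNorm_comp_le _).trans (mul_le_of_le_one_right (norm_nonneg l) ?_)
    exact I.norm_toContinuousLinearMap_le
  · obtain ⟨u, rfl⟩ := withDensitySMulLI_surjective hw (fun x => (hw₀ x).ne') v
    rw [withDensitySMulLI_apply]
    refine (hl u).trans ?_
    rw [integral_withDensity_eq_integral_smul hw]
    refine integral_congr_ae ?_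
    filter_upwards [(memL1_smul_of_L1_withDensity hw u).coeFn_toLp] with x hx
    rw [hx, smul_mul_assoc]

theorem exists_density_of_enorm_le_lintegral [SigmaFinite μ] {V : Type*} [AddCommGroup V]
    [Module ℝ V] (T : V →ₗ[ℝ] α → ℝ) (hT : ∀ v, Integrable (T v) μ) (Λ : V →ₗ[ℝ] ℝ) (M : ℝ≥0)
    (hΛ : ∀ v, ‖Λ v‖ₑ ≤ M * ∫⁻ x, ‖T v x‖ₑ ∂μ) :
    ∃ s : α → ℝ, Measurable s ∧ (∀ x, |s x| ≤ M) ∧ ∀ v, Λ v = ∫ x, T v x * s x ∂μ := by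
  let T₁ : V →ₗ[ℝ] Lp ℝ 1 μ :=
    { toFun := fun v => (hT v).toL1
      map_add' := fun v w => by
        simp only [map_add]
        exact Integrable.toL1_add _ _ (hT v) (hT w)
      map_smul' := fun c v => by
        simp only [map_smul]
        exact Integrable.toL1_smul _ (hT v) c }
  obtain ⟨l, hlM, hl⟩ := exists_strongDual_comp_eq T₁ Λ M fun v => by
    have h : ‖Λ v‖₊ ≤ M * ‖T₁ v‖₊ := by
      rw [← ENNReal.coe_le_coe]
      exact (hΛ v).trans_eq (by rw [← Integrable.enorm_toL1 (hT v)]; rfl)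
    exact h
  obtain ⟨s, hs, hsl, hls⟩ := exists_density_of_strongDual l
  refine ⟨s, hs, fun x => (hsl x).trans hlM, fun v => ?_⟩
  rw [← hl, hls]
  refine integral_congr_ae ?_
  filter_upwards [(hT v).coeFn_toL1] with x hx
  exact congrArg (· * s x) hx

end Duality

section LipschitzImage

variable {E : Type*} [NormedAddCommGroup E] [NormedSpace ℝ E] [FiniteDimensional ℝ E]
  [MeasurableSpace E] [BorelSpace E] {μ : Measure E} [μ.IsAddHaarMeasure]
  {C : ℝ≥0} {Φ : E → E} {s : Set E}

theorem measure_image_le_of_lipschitzOnWith (h : LipschitzOnWith C Φ s) :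
    μ (Φ '' s) ≤ (C : ℝ≥0∞) ^ Module.finrank ℝ E * μ s := by
  have hH := h.hausdorffMeasure_image_le (d := (Module.finrank ℝ E : ℝ)) (by positivity)
  rw [Measure.isAddLeftInvariant_eq_smul μ μH[Module.finrank ℝ E], Measure.smul_apply,
    Measure.smul_apply, mul_smul_comm]
  gcongr
  rwa [ENNReal.rpow_natCast] at hH

theorem measure_image_le_of_locally_lipschitzOnWith
    (h : ∀ x ∈ s, ∃ U ∈ 𝓝 x, LipschitzOnWith C Φ (s ∩ U)) :
    μ (Φ '' s) ≤ (C : ℝ≥0∞) ^ Module.finrank ℝ E * μ s := by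
  choose! U hU hΦ using h
  obtain ⟨t, hts, htc, hst⟩ := TopologicalSpace.countable_cover_nhdsWithin (s := s)
    (f := fun x => interior (U x)) fun x hx =>
      mem_nhdsWithin_of_mem_nhds (interior_mem_nhds.2 (hU x hx))
  obtain rfl | hs := s.eq_empty_or_nonempty
  · simp
  obtain ⟨x, rfl⟩ := htc.exists_eq_range (nonempty_biUnion.1 (hs.mono hst) |>.imp fun _ h => h.1)
  let D : ℕ → Set E := disjointed fun n => interior (U (x n))
  have hD : ∀ n, MeasurableSet (D n) :=
    MeasurableSet.disjointed fun n => isOpen_interior.measurableSet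
  have hDs : ⋃ n, s ∩ D n = s := by
    rw [← inter_iUnion, iUnion_disjointed, inter_eq_left]
    simpa using hst
  calc μ (Φ '' s) = μ (⋃ n, Φ '' (s ∩ D n)) := by rw [← image_iUnion, hDs]
    _ ≤ ∑' n, μ (Φ '' (s ∩ D n)) := measure_iUnion_le _
    _ ≤ ∑' n, (C : ℝ≥0∞) ^ Module.finrank ℝ E * μ.restrict s (D n) := by
        refine ENNReal.tsum_le_tsum fun n => ?_
        rw [Measure.restrict_apply (hD n), inter_comm (D n)]
        refine measure_image_le_of_lipschitzOnWith ((hΦ (x n) (hts ⟨n, rfl⟩)).mono ?_)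
        exact inter_subset_inter_right s ((disjointed_subset _ n).trans interior_subset)
    _ = (C : ℝ≥0∞) ^ Module.finrank ℝ E * μ.restrict s (⋃ n, D n) := by
        rw [ENNReal.tsum_mul_left, measure_iUnion (disjoint_disjointed _) hD]
    _ = (C : ℝ≥0∞) ^ Module.finrank ℝ E * μ s := by
        rw [Measure.restrict_apply (.iUnion hD), inter_comm, inter_iUnion, hDs]

theorem lintegral_le_of_locally_lipschitzOnWith {A : Set E} {k : E → ℝ≥0∞} (hk : Measurable k)
    (hs : MeasurableSet s) (h : ∀ x ∈ s, ∃ U ∈ 𝓝 x, LipschitzOnWith C Φ (s ∩ U))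
    (hA : A ⊆ Φ '' s) :
    ∫⁻ x in A, k x ∂μ ≤ (C : ℝ≥0∞) ^ Module.finrank ℝ E * ∫⁻ x in s, k (Φ x) ∂μ := by
  have hΦc : ContinuousOn Φ s := fun x hx => by
    obtain ⟨U, hU, hΦ⟩ := h x hx
    exact (hΦ.continuousOn x ⟨hx, mem_of_mem_nhds hU⟩).mono_of_mem_nhdsWithin
      (inter_mem_nhdsWithin s hU)
  have hΦm : AEMeasurable Φ (μ.restrict s) := hΦc.aemeasurable hs
  have hle : μ.restrict A ≤ (C : ℝ≥0∞) ^ Module.finrank ℝ E • (μ.restrict s).map Φ := by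
    refine Measure.le_iff.2 fun B hB => ?_
    rw [Measure.restrict_apply hB, Measure.smul_apply, Measure.map_apply_of_aemeasurable hΦm hB,
      Measure.restrict_apply₀' hs.nullMeasurableSet, smul_eq_mul]
    refine (measure_mono (t := Φ '' (Φ ⁻¹' B ∩ s)) ?_).trans
      (measure_image_le_of_locally_lipschitzOnWith fun x hx => ?_)
    · rintro y ⟨hyB, hyA⟩
      obtain ⟨x, hx, rfl⟩ := hA hyA
      exact ⟨x, ⟨hyB, hx⟩, rfl⟩
    · obtain ⟨U, hU, hΦ⟩ := h x hx.2
      exact ⟨U, hU, hΦ.mono (inter_subset_inter_left U inter_subset_right)⟩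
  calc ∫⁻ x in A, k x ∂μ ≤ ∫⁻ x, k x ∂((C : ℝ≥0∞) ^ Module.finrank ℝ E • (μ.restrict s).map Φ) :=
        lintegral_mono' hle le_rfl
    _ = (C : ℝ≥0∞) ^ Module.finrank ℝ E * ∫⁻ x in s, k (Φ x) ∂μ := by
        rw [lintegral_smul_measure, lintegral_map' hk.aemeasurable hΦm, smul_eq_mul]

end LipschitzImage

/-- `g` is Lipschitz with the fixed constant `L` on a ball around each point of the open set `Ω`.
This encodes `g ∈ W^{1,∞}(Ω)` with `‖Dg‖_∞ ≤ L`. -/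
def LocallyLipschitzOnWith {X Y : Type*} [PseudoMetricSpace X] [PseudoMetricSpace Y]
    (L : ℝ≥0) (g : X → Y) (Ω : Set X) : Prop :=
  ∀ y ∈ Ω, ∃ ε : ℝ, 0 < ε ∧ ball y ε ⊆ Ω ∧ LipschitzOnWith L g (ball y ε)

theorem LocallyLipschitzOnWith.continuousOn {X Y : Type*} [PseudoMetricSpace X]
    [PseudoMetricSpace Y] {L : ℝ≥0} {g : X → Y} {Ω : Set X} (hg : LocallyLipschitzOnWith L g Ω) :
    ContinuousOn g Ω := fun y hy => by
  obtain ⟨ε, hε, -, hgε⟩ := hg y hy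
  exact (hgε.continuousOn.continuousAt (ball_mem_nhds y hε)).continuousWithinAt

section AreaEstimate

theorem setLIntegral_mul_enorm_sub_eq_lintegral_prod {α : Type*} [MeasurableSpace α] {μ : Measure α}
    [SFinite μ] {D : Set α} (hD : MeasurableSet D) {k : α → ℝ≥0∞} (hk : Measurable k) {u v : α → ℝ}
    (hu : Measurable u) (hv : Measurable v) :
    ∫⁻ x in D, k x * ‖v x - u x‖ₑ ∂μ =
      ∫⁻ p in {p : α × ℝ | p.1 ∈ D ∧ p.2 ∈ uIoc (u p.1) (v p.1)}, k p.1 ∂(μ.prod volume) := by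
  have hR : MeasurableSet {p : α × ℝ | p.1 ∈ D ∧ p.2 ∈ uIoc (u p.1) (v p.1)} := by
    refine (measurable_fst hD).inter (.inter ?_ ?_)
    · exact measurableSet_lt ((hu.comp measurable_fst).min (hv.comp measurable_fst)) measurable_snd
    · exact measurableSet_le measurable_snd ((hu.comp measurable_fst).max (hv.comp measurable_fst))
  have hk₁ : Measurable fun p : α × ℝ => k p.1 := hk.comp measurable_fst
  rw [← lintegral_indicator hR, lintegral_prod _ (hk₁.indicator hR).aemeasurable,
    ← lintegral_indicator hD]
  refine lintegral_congr fun x => ?_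
  by_cases hx : x ∈ D
  · calc D.indicator (fun x => k x * ‖v x - u x‖ₑ) x
        = ∫⁻ t, (uIoc (u x) (v x)).indicator (fun _ => k x) t := by
          rw [lintegral_indicator measurableSet_uIoc, setLIntegral_const, Real.volume_uIoc,
            indicator_of_mem hx, Real.enorm_eq_ofReal_abs]
      _ = _ := lintegral_congr fun t => by
          by_cases ht : t ∈ uIoc (u x) (v x) <;> simp [hx, ht]
  · simp [indicator, hx]

variable {E : Type*} [NormedAddCommGroup E] [NormedSpace ℝ E] {L : ℝ≥0} {g : E → E} {Ω : Set E}
  {p : E → ℝ} {e : E}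

theorem lipschitzOnWith_sub_smul_prodMk {U : Set E} (hg : LipschitzOnWith L g U)
    (hp : LipschitzWith 1 p) (he : ‖e‖ ≤ 1) :
    LipschitzOnWith (L + 1) (fun q : E × ℝ => (g q.1 - q.2 • e, p q.1)) (U ×ˢ univ) := by
  have hg' : LipschitzOnWith L (fun q : E × ℝ => g q.1) (U ×ˢ univ) := by
    simpa [Function.comp_def] using hg.comp LipschitzWith.prod_fst.lipschitzOnWith fun q hq => hq.1
  have he' : LipschitzWith 1 fun q : E × ℝ => q.2 • e :=
    LipschitzWith.of_dist_le_mul fun q r => by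
      rw [dist_eq_norm, ← sub_smul, norm_smul, NNReal.coe_one, one_mul, ← dist_eq_norm]
      exact (mul_le_of_le_one_right dist_nonneg he).trans (le_max_right _ _)
  have hp' : LipschitzWith 1 fun q : E × ℝ => p q.1 := by
    simpa [Function.comp_def] using hp.comp LipschitzWith.prod_fst
  simpa using (hg'.sub he'.lipschitzOnWith).prodMk hp'.lipschitzOnWith

variable [FiniteDimensional ℝ E] [MeasurableSpace E] [BorelSpace E] {μ : Measure E}
  [μ.IsAddHaarMeasure]

theorem lintegral_enorm_mul_enorm_sub_le (hΩ : MeasurableSet Ω)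
    (hg : LocallyLipschitzOnWith L g Ω) (hp : LipschitzWith 1 p) (he : ‖e‖ ≤ 1) {φ u : E → ℝ}
    (hφ : Continuous φ) (hu : Continuous u) {h : ℝ} (hh : 0 ≤ h)
    (hcov : ∀ x, φ x ≠ 0 → ∀ τ ∈ Icc 0 h, ∃ y ∈ Ω, g y = x + τ • e ∧ p y = u (x + τ • e)) :
    ∫⁻ x, ‖φ x‖ₑ * ‖u (x + h • e) - u x‖ₑ ∂μ ≤
      (L + 1 : ℝ≥0∞) ^ (Module.finrank ℝ E + 1) *
        ∫⁻ y in Ω, (∫⁻ τ in Icc 0 h, ‖φ (g y - τ • e)‖ₑ) ∂μ := by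
  let Φ : E × ℝ → E × ℝ := fun q => (g q.1 - q.2 • e, p q.1)
  let S : Set (E × ℝ) := Ω ×ˢ Icc 0 h
  have hS : MeasurableSet S := hΩ.prod measurableSet_Icc
  have hΦ : ∀ q ∈ S, ∃ U ∈ 𝓝 q, LipschitzOnWith (L + 1) Φ (S ∩ U) := fun q hq => by
    obtain ⟨ε, hε, -, hgε⟩ := hg q.1 hq.1
    exact ⟨ball q.1 ε ×ˢ univ, prod_mem_nhds (ball_mem_nhds _ hε) univ_mem,
      (lipschitzOnWith_sub_smul_prodMk hgε hp he).mono inter_subset_right⟩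
  have himage : {q : E × ℝ | q.1 ∈ Function.support φ ∧ q.2 ∈ uIoc (u q.1) (u (q.1 + h • e))} ⊆
      Φ '' S := by
    rintro ⟨x, t⟩ ⟨hx, ht⟩
    have hivt := intermediate_value_uIcc (a := 0) (b := h) (f := fun τ : ℝ => u (x + τ • e))
      (by fun_prop)
    simp only [zero_smul, add_zero, uIcc_of_le hh] at hivt
    obtain ⟨τ, hτ, rfl⟩ := hivt (uIoc_subset_uIcc ht)
    obtain ⟨y, hy, hgy, hpy⟩ := hcov x hx τ hτ
    exact ⟨(y, τ), ⟨hy, hτ⟩, by simp [Φ, hgy, hpy]⟩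
  calc ∫⁻ x, ‖φ x‖ₑ * ‖u (x + h • e) - u x‖ₑ ∂μ
      = ∫⁻ x in Function.support φ, ‖φ x‖ₑ * ‖u (x + h • e) - u x‖ₑ ∂μ := by
        rw [← lintegral_indicator hφ.isOpen_support.measurableSet]
        congr with x
        by_cases hx : φ x = 0 <;> simp [indicator, hx]
    _ = ∫⁻ q in {q : E × ℝ | q.1 ∈ Function.support φ ∧ q.2 ∈ uIoc (u q.1) (u (q.1 + h • e))},
          ‖φ q.1‖ₑ ∂(μ.prod volume) :=
        setLIntegral_mul_enorm_sub_eq_lintegral_prod hφ.isOpen_support.measurableSet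
          hφ.measurable.enorm hu.measurable (by fun_prop)
    _ ≤ (L + 1 : ℝ≥0∞) ^ (Module.finrank ℝ E + 1) * ∫⁻ q in S, ‖φ (Φ q).1‖ₑ ∂(μ.prod volume) := by
        simpa using lintegral_le_of_locally_lipschitzOnWith (μ := μ.prod volume)
          (k := fun q => ‖φ q.1‖ₑ) (hφ.measurable.comp measurable_fst).enorm hS hΦ himage
    _ ≤ _ := by
        rw [← Measure.prod_restrict]
        gcongr
        exact lintegral_prod_le _

end AreaEstimate

section DifferenceQuotient

theorem integral_sub_mul_eq_integral_mul_sub {E : Type*} [NormedAddCommGroup E] [MeasurableSpace E]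
    [BorelSpace E] {μ : Measure E} [μ.IsAddRightInvariant] [IsFiniteMeasureOnCompacts μ]
    {φ u : E → ℝ} (hφ : Continuous φ) (hφc : HasCompactSupport φ)
    (hu : Continuous u) (v : E) :
    ∫ x, (φ (x - v) - φ x) * u x ∂μ = ∫ x, φ x * (u (x + v) - u x) ∂μ := by
  have hint : ∀ w : E, Integrable (fun x => φ x * u (x + w)) μ := fun w =>
    (by fun_prop : Continuous fun x => φ x * u (x + w)).integrable_of_hasCompactSupport
      hφc.mul_right
  have hint' : Integrable (fun x => φ (x - v) * u x) μ := by
    simpa using (hint v).comp_sub_right v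
  have h0 : Integrable (fun x => φ x * u x) μ := by simpa using hint 0
  calc ∫ x, (φ (x - v) - φ x) * u x ∂μ
      = ∫ x, φ (x - v) * u x ∂μ - ∫ x, φ x * u x ∂μ := by
        simp only [sub_mul]; exact integral_sub hint' h0
    _ = ∫ x, φ x * u (x + v) ∂μ - ∫ x, φ x * u x ∂μ := by
        rw [← integral_sub_right_eq_self (fun x => φ x * u (x + v)) v]
        simp
    _ = _ := by simp only [mul_sub]; exact (integral_sub (hint v) h0).symm

variable {E : Type*} [NormedAddCommGroup E] [NormedSpace ℝ E] {C : ℝ≥0} {e : E} {φ u : E → ℝ}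

theorem enorm_sub_smul_le_add_indicator (hφ : LipschitzWith C φ) (he : ‖e‖ ≤ 1) {h τ : ℝ}
    (hτ : τ ∈ Icc 0 h) (x : E) :
    ‖φ (x - τ • e)‖ₑ ≤
      ‖φ x‖ₑ + (cthickening h (tsupport φ)).indicator (fun _ => C * ENNReal.ofReal h) x := by
  have hdist : dist x (x - τ • e) ≤ h := by
    rw [dist_self_sub_right, norm_smul, Real.norm_of_nonneg hτ.1]
    exact (mul_le_of_le_one_right hτ.1 he).trans hτ.2
  by_cases hx : x ∈ cthickening h (tsupport φ)
  · rw [indicator_of_mem hx]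
    calc ‖φ (x - τ • e)‖ₑ ≤ ‖φ x‖ₑ + ‖φ (x - τ • e) - φ x‖ₑ := by
          simpa using enorm_add_le (φ x) (φ (x - τ • e) - φ x)
      _ ≤ ‖φ x‖ₑ + C * ENNReal.ofReal h := by
          gcongr
          rw [← edist_eq_enorm_sub, edist_comm]
          refine (hφ x (x - τ • e)).trans ?_
          gcongr
          exact edist_le_ofReal (hτ.1.trans hτ.2) |>.2 hdist
  · have : x - τ • e ∉ tsupport φ := fun hmem => hx (mem_cthickening_of_dist_le _ _ _ _ hmem hdist)
    simp [image_eq_zero_of_notMem_tsupport this]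

variable [MeasurableSpace E] {μ : Measure E}

theorem setIntegral_mul_fderiv_eq_neg_integral_lineDeriv_mul (hφ : Differentiable ℝ φ) {Ω : Set E}
    (hφΩ : tsupport φ ⊆ Ω) {w : E → ℝ} (hwu : EqOn w u (tsupport φ)) :
    ∫ x in Ω, w x * fderiv ℝ φ x e ∂μ = -∫ x, lineDeriv ℝ φ x (-e) * u x ∂μ := by
  rw [setIntegral_eq_integral_of_forall_compl_eq_zero, ← integral_neg]
  · refine integral_congr_ae (.of_forall fun x => ?_)
    by_cases hx : x ∈ tsupport φ
    · simp [hwu hx, (hφ x).lineDeriv_eq_fderiv, mul_comm]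
    · simp [fderiv_of_notMem_tsupport ℝ hx, (hφ x).lineDeriv_eq_fderiv]
  · intro x hx
    simp [fderiv_of_notMem_tsupport ℝ fun h => hx (hφΩ h)]

variable [BorelSpace E]

theorem lintegral_lintegral_enorm_sub_smul_le (hφ : LipschitzWith C φ) (he : ‖e‖ ≤ 1) {g : E → E}
    {Ω : Set E} {t δ : ℝ} (ht : t ≤ δ)
    (hΩ : MeasurableSet Ω) (hg : ContinuousOn g Ω) :
    ∫⁻ y in Ω, (∫⁻ τ in Icc 0 t, ‖φ (g y - τ • e)‖ₑ) ∂μ ≤ ENNReal.ofReal t *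
      (∫⁻ y in Ω, ‖φ (g y)‖ₑ ∂μ +
        C * μ (g ⁻¹' cthickening δ (tsupport φ) ∩ Ω) * ENNReal.ofReal t) := by
  let T := cthickening δ (tsupport φ)
  have hgm : AEMeasurable g (μ.restrict Ω) := hg.aemeasurable hΩ
  have hT : NullMeasurableSet (g ⁻¹' T) (μ.restrict Ω) :=
    hgm.nullMeasurableSet_preimage isClosed_cthickening.measurableSet
  calc ∫⁻ y in Ω, (∫⁻ τ in Icc 0 t, ‖φ (g y - τ • e)‖ₑ) ∂μ
      ≤ ∫⁻ y in Ω, (∫⁻ _ in Icc 0 t,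
          (‖φ (g y)‖ₑ + (g ⁻¹' T).indicator (fun _ => C * ENNReal.ofReal t) y)) ∂μ := by
        refine lintegral_mono fun y => setLIntegral_mono measurable_const fun τ hτ => ?_
        refine (enorm_sub_smul_le_add_indicator hφ he hτ (g y)).trans ?_
        gcongr
        exact indicator_le_indicator_of_subset (cthickening_mono ht _) (fun _ => zero_le) _
    _ = ENNReal.ofReal t * (∫⁻ y in Ω, ‖φ (g y)‖ₑ ∂μ +
          ∫⁻ y in Ω, (g ⁻¹' T).indicator (fun _ => C * ENNReal.ofReal t) y ∂μ) := by
        simp only [setLIntegral_const, Real.volume_Icc, sub_zero]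
        rw [lintegral_mul_const', lintegral_add_left', mul_comm]
        · exact (hφ.continuous.measurable.comp_aemeasurable hgm).enorm
        · exact ENNReal.ofReal_ne_top
    _ = _ := by
        rw [lintegral_indicator_const₀ hT, Measure.restrict_apply₀ hT, mul_right_comm]

variable [FiniteDimensional ℝ E] [μ.IsAddHaarMeasure]

theorem enorm_integral_lineDeriv_mul_le (hφ : LipschitzWith C φ) (hφc : HasCompactSupport φ)
    (hu : Continuous u) {A B : ℝ≥0∞} (hB : B ≠ ∞) {δ : ℝ} (hδ : 0 < δ)
    (h : ∀ t ∈ Ioc 0 δ, ∫⁻ x, ‖φ x‖ₑ * ‖u (x + t • e) - u x‖ₑ ∂μ ≤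
      ENNReal.ofReal t * (A + B * ENNReal.ofReal t)) :
    ‖∫ x, lineDeriv ℝ φ x (-e) * u x ∂μ‖ₑ ≤ A := by
  have hlim := (hφ.integral_inv_smul_sub_mul_tendsto_integral_lineDeriv_mul' (μ := μ) hφc hu
    (-e)).enorm
  have hAB : Tendsto (fun t : ℝ => A + B * ENNReal.ofReal t) (𝓝[>] 0) (𝓝 A) := by
    have := (ENNReal.Tendsto.const_mul
      (ENNReal.tendsto_ofReal (tendsto_id (x := 𝓝 (0 : ℝ)))) (.inr hB)).const_add A
    simpa using this.mono_left nhdsWithin_le_nhds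
  refine le_of_tendsto_of_tendsto hlim hAB ?_
  filter_upwards [Ioc_mem_nhdsGT hδ] with t ht
  have ht' : ENNReal.ofReal t ≠ 0 := by simpa using ht.1
  calc ‖∫ x, (t⁻¹ • (φ (x + t • -e) - φ x)) * u x ∂μ‖ₑ
      = (ENNReal.ofReal t)⁻¹ * ‖∫ x, φ x * (u (x + t • e) - u x) ∂μ‖ₑ := by
        rw [← integral_sub_mul_eq_integral_mul_sub hφ.continuous hφc hu]
        simp only [smul_eq_mul, mul_assoc, smul_neg, ← sub_eq_add_neg]
        rw [integral_const_mul, enorm_mul, Real.enorm_of_nonneg (inv_nonneg.2 ht.1.le),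
          ENNReal.ofReal_inv_of_pos ht.1]
    _ ≤ (ENNReal.ofReal t)⁻¹ * (ENNReal.ofReal t * (A + B * ENNReal.ofReal t)) := by
        gcongr
        refine (enorm_integral_le_lintegral_enorm _).trans (le_of_eq_of_le ?_ (h t ht))
        simp only [enorm_mul]
    _ = A + B * ENNReal.ofReal t := ENNReal.inv_mul_cancel_left ht' ENNReal.ofReal_ne_top

variable {L : ℝ≥0} {f g : E → E} {Ω₁ Ω₂ : Set E} {p : E → ℝ}

theorem exists_lintegral_enorm_mul_enorm_sub_le (hΩ₂ : MeasurableSet Ω₂) (hf : ContinuousOn f Ω₁)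
    (hfm : MapsTo f Ω₁ Ω₂) (hinv : InvOn g f Ω₁ Ω₂) (hg : LocallyLipschitzOnWith L g Ω₂)
    (hp : LipschitzWith 1 p) (he : ‖e‖ ≤ 1) (hφ : LipschitzWith C φ) (hφc : HasCompactSupport φ)
    (hu : Continuous u) {δ : ℝ} (hδ : cthickening δ (tsupport φ) ⊆ Ω₁)
    (hup : EqOn u (p ∘ f) (cthickening δ (tsupport φ))) :
    ∃ B : ℝ≥0∞, B ≠ ∞ ∧ ∀ t ∈ Ioc 0 δ, ∫⁻ x, ‖φ x‖ₑ * ‖u (x + t • e) - u x‖ₑ ∂μ ≤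
      ENNReal.ofReal t * ((L + 1 : ℝ≥0∞) ^ (Module.finrank ℝ E + 1) *
        ∫⁻ y in Ω₂, ‖φ (g y)‖ₑ ∂μ + B * ENNReal.ofReal t) := by
  let T := cthickening δ (tsupport φ)
  let c : ℝ≥0∞ := (L + 1 : ℝ≥0∞) ^ (Module.finrank ℝ E + 1)
  have hc : c ≠ ∞ := ENNReal.pow_ne_top (by simp)
  have hgT : μ (g ⁻¹' T ∩ Ω₂) ≠ ∞ := by
    refine ne_top_of_le_ne_top (hφc.isCompact.cthickening.image_of_continuousOn
      (hf.mono hδ)).measure_ne_top (measure_mono fun y hy => ?_)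
    exact ⟨g y, hy.1, hinv.2 hy.2⟩
  refine ⟨c * (C * μ (g ⁻¹' T ∩ Ω₂)), ENNReal.mul_ne_top hc (ENNReal.mul_ne_top (by simp) hgT),
    fun t ht => ?_⟩
  have hcov : ∀ x, φ x ≠ 0 → ∀ τ ∈ Icc 0 t, ∃ y ∈ Ω₂, g y = x + τ • e ∧ p y = u (x + τ • e) := by
    intro x hx τ hτ
    have hT : x + τ • e ∈ T := by
      refine mem_cthickening_of_dist_le _ x _ _ (subset_tsupport φ hx) ?_
      rw [dist_self_add_left, norm_smul, Real.norm_of_nonneg hτ.1]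
      exact (mul_le_of_le_one_right hτ.1 he).trans (hτ.2.trans ht.2)
    exact ⟨f (x + τ • e), hfm (hδ hT), hinv.1 (hδ hT), (hup hT).symm⟩
  calc ∫⁻ x, ‖φ x‖ₑ * ‖u (x + t • e) - u x‖ₑ ∂μ
      ≤ c * ∫⁻ y in Ω₂, (∫⁻ τ in Icc 0 t, ‖φ (g y - τ • e)‖ₑ) ∂μ :=
        lintegral_enorm_mul_enorm_sub_le hΩ₂ hg hp he hφ.continuous hu ht.1.le hcov
    _ ≤ c * (ENNReal.ofReal t * (∫⁻ y in Ω₂, ‖φ (g y)‖ₑ ∂μ +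
          C * μ (g ⁻¹' T ∩ Ω₂) * ENNReal.ofReal t)) := by
        gcongr
        exact lintegral_lintegral_enorm_sub_smul_le hφ he ht.2 hΩ₂ hg.continuousOn
    _ = _ := by ring

theorem enorm_setIntegral_comp_mul_fderiv_le (hΩ₁ : IsOpen Ω₁) (hΩ₂ : MeasurableSet Ω₂)
    (hf : ContinuousOn f Ω₁) (hfm : MapsTo f Ω₁ Ω₂) (hinv : InvOn g f Ω₁ Ω₂)
    (hg : LocallyLipschitzOnWith L g Ω₂) (hp : LipschitzWith 1 p) (he : ‖e‖ ≤ 1)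
    (hφ : ContDiff ℝ 1 φ) (hφc : HasCompactSupport φ) (hφΩ : tsupport φ ⊆ Ω₁) :
    ‖∫ x in Ω₁, p (f x) * fderiv ℝ φ x e ∂μ‖ₑ ≤
      (L + 1 : ℝ≥0∞) ^ (Module.finrank ℝ E + 1) * ∫⁻ y in Ω₂, ‖φ (g y)‖ₑ ∂μ := by
  obtain ⟨δ, hδ, hδΩ⟩ := hφc.isCompact.exists_cthickening_subset_open hΩ₁ hφΩ
  have hpf : ContinuousOn (p ∘ f) (cthickening δ (tsupport φ)) :=
    hp.continuous.comp_continuousOn (hf.mono hδΩ)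
  obtain ⟨u, hu⟩ := ContinuousMap.exists_restrict_eq isClosed_cthickening ⟨_, hpf.domRestrict⟩
  have hup : EqOn u (p ∘ f) (cthickening δ (tsupport φ)) := fun x hx =>
    DFunLike.congr_fun hu ⟨x, hx⟩
  obtain ⟨C, hφC⟩ := hφ.lipschitzWith_of_hasCompactSupport hφc one_ne_zero
  obtain ⟨B, hB, hBt⟩ := exists_lintegral_enorm_mul_enorm_sub_le (μ := μ) hΩ₂ hf hfm hinv hg hp he
    hφC hφc u.continuous hδΩ hup
  rw [setIntegral_mul_fderiv_eq_neg_integral_lineDeriv_mul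
    (w := fun x => p (f x)) (hφ.differentiable one_ne_zero) hφΩ
    (hup.symm.mono (self_subset_cthickening _)), enorm_neg]
  exact enorm_integral_lineDeriv_mul_le hφC hφc u.continuous hB hδ hBt

end DifferenceQuotient

section FrobeniusNorm

variable {m n : ℕ} (M : Fin m → Fin n → ℝ)

theorem measurable_frobNorm : Measurable (frobNorm : (Fin m → Fin n → ℝ) → ℝ) := by
  unfold frobNorm
  fun_prop

theorem frobNorm_nonneg : 0 ≤ frobNorm M :=
  Real.sqrt_nonneg _

theorem abs_le_frobNorm (j : Fin m) (i : Fin n) : |M j i| ≤ frobNorm M := by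
  refine Real.abs_le_sqrt ?_
  calc M j i ^ 2 ≤ ∑ i, M j i ^ 2 :=
        Finset.single_le_sum (f := fun i => M j i ^ 2) (fun _ _ => sq_nonneg _) (Finset.mem_univ i)
    _ ≤ ∑ j, ∑ i, M j i ^ 2 :=
        Finset.single_le_sum (f := fun j => ∑ i, M j i ^ 2)
          (fun _ _ => Finset.sum_nonneg fun _ _ => sq_nonneg _) (Finset.mem_univ j)

theorem frobNorm_div {c : ℝ} (hc : 0 ≤ c) : frobNorm (fun j i => M j i / c) = frobNorm M / c := by
  simp only [frobNorm, div_pow, ← Finset.sum_div]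
  rw [Real.sqrt_div' _ (sq_nonneg c), Real.sqrt_sq hc]

theorem frobNorm_le_of_forall_abs_le {M : Fin m → Fin n → ℝ} {B : ℝ} (h : ∀ j i, |M j i| ≤ B) :
    frobNorm M ≤ √(m * n * B ^ 2) := by
  refine Real.sqrt_le_sqrt ?_
  calc ∑ j, ∑ i, M j i ^ 2 ≤ ∑ _j : Fin m, ∑ _i : Fin n, B ^ 2 :=
        Finset.sum_le_sum fun j _ => Finset.sum_le_sum fun i _ =>
          sq_le_sq.2 ((h j i).trans (le_abs_self B))
    _ = m * n * B ^ 2 := by simp [mul_assoc]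

end FrobeniusNorm

/-- The real vector space of smooth test functions compactly supported in `Ω`. -/
def testSubmodule {n : ℕ} (Ω : Set (En n)) : Submodule ℝ (En n → ℝ) where
  carrier := {φ | SmoothTest Ω φ}
  add_mem' := fun ⟨ha, ha', ha''⟩ ⟨hb, hb', hb''⟩ =>
    ⟨ha.add hb, ha'.add hb', (tsupport_add _ _).trans (union_subset ha'' hb'')⟩
  zero_mem' := ⟨contDiff_const, .zero, by simp [tsupport]⟩
  smul_mem' c _ := fun ⟨ha, ha', ha''⟩ =>
    ⟨contDiff_const.smul ha, ha'.smul_left (f := fun _ => c),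
      (closure_mono (Function.support_const_smul_subset c _)).trans ha''⟩

/-- The distributional derivative of `u` on `Ω` in the direction `e` is the signed measure `s · ν`.
A variation measure of `f` is a common `ν` for all components of `f` and all basis directions. -/
def HasDistribDeriv {n : ℕ} (Ω : Set (En n)) (u : En n → ℝ) (e : En n) (s : En n → ℝ)
    (ν : Measure (En n)) : Prop :=
  ∀ φ : En n → ℝ, SmoothTest Ω φ →
    ∫ x in Ω, u x * fderiv ℝ φ x e = -∫ x, φ x * s x ∂ν

section DistributionalDerivative

variable {m n : ℕ} {Ω : Set (En n)} {μ : Measure (En n)}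

theorem integrable_of_continuousOn_of_support_subset {w : En n → ℝ} {C : Set (En n)}
    (hC : IsCompact C) (hw : ContinuousOn w C) (hwC : Function.support w ⊆ C) (hμ : μ C < ∞) :
    Integrable w μ :=
  (integrableOn_iff_integrable_of_support_subset hwC).1
    (hw.integrableOn_of_subset_isCompact hC hC.measurableSet subset_rfl hμ.ne)

theorem SmoothTest.integrable {φ : En n → ℝ} (hφ : SmoothTest Ω φ)
    (hμ : ∀ C, IsCompact C → C ⊆ Ω → μ C < ∞) : Integrable φ μ :=
  integrable_of_continuousOn_of_support_subset hφ.2.1 hφ.1.continuous.continuousOn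
    (subset_tsupport φ) (hμ _ hφ.2.1 hφ.2.2)

theorem SmoothTest.integrableOn_mul_fderiv {φ u : En n → ℝ} (hφ : SmoothTest Ω φ)
    (hu : ContinuousOn u Ω) (e : En n) : IntegrableOn (fun x => u x * fderiv ℝ φ x e) Ω := by
  have hdφ : Continuous fun x => fderiv ℝ φ x e :=
    (hφ.1.continuous_fderiv (by simp)).clm_apply continuous_const
  refine (integrable_of_continuousOn_of_support_subset hφ.2.1
    ((hu.mono hφ.2.2).mul hdφ.continuousOn) (fun x hx => ?_)
    hφ.2.1.isCompact.measure_lt_top).integrableOn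
  by_contra h
  exact hx (by simp [fderiv_of_notMem_tsupport ℝ h])

theorem exists_hasDistribDeriv_of_enorm_le [SigmaFinite μ] {u : En n → ℝ} (hu : ContinuousOn u Ω)
    {e : En n} (hμ : ∀ C, IsCompact C → C ⊆ Ω → μ C < ∞) {M : ℝ≥0}
    (h : ∀ φ, SmoothTest Ω φ → ‖∫ x in Ω, u x * fderiv ℝ φ x e‖ₑ ≤ M * ∫⁻ x, ‖φ x‖ₑ ∂μ) :
    ∃ s : En n → ℝ, Measurable s ∧ (∀ x, |s x| ≤ M) ∧ HasDistribDeriv Ω u e s μ := by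
  let Λ : testSubmodule Ω →ₗ[ℝ] ℝ :=
    { toFun φ := ∫ x in Ω, u x * fderiv ℝ φ.1 x e
      map_add' φ ψ := by
        rw [← integral_add (φ.2.integrableOn_mul_fderiv hu e) (ψ.2.integrableOn_mul_fderiv hu e)]
        congr with x
        simp [fderiv_add (φ.2.1.differentiable (by simp) x) (ψ.2.1.differentiable (by simp) x),
          mul_add]
      map_smul' c φ := by
        simp only [RingHom.id_apply, smul_eq_mul, ← integral_const_mul]
        congr with x
        simp [fderiv_const_smul (φ.2.1.differentiable (by simp) x), mul_left_comm] }
  obtain ⟨s, hs, hsM, hΛs⟩ := exists_density_of_enorm_le_lintegral (testSubmodule Ω).subtype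
    (fun φ => φ.2.integrable hμ) (-Λ) M fun φ => (enorm_neg _).trans_le (h φ.1 φ.2)
  exact ⟨s, hs, hsM, fun φ hφ => neg_eq_iff_eq_neg.1 (hΛs ⟨φ, hφ⟩)⟩

theorem memBVloc_withDensity_frobNorm (hΩ : IsOpen Ω) {f : En n → En m} (hf : ContinuousOn f Ω)
    (hμΩ : μ Ωᶜ = 0) (hμ : ∀ C, IsCompact C → C ⊆ Ω → μ C < ∞) {s : En n → Fin m → Fin n → ℝ}
    (hs : Measurable s) {B : ℝ} (hsB : ∀ x, frobNorm (s x) ≤ B)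
    (h : ∀ j i, HasDistribDeriv Ω (fun x => f x j) (EuclideanSpace.single i 1)
      (fun x => s x j i) μ) :
    MemBVloc Ω f (μ.withDensity fun x => ENNReal.ofReal (frobNorm (s x))) := by
  have hN : Measurable fun x => frobNorm (s x) := measurable_frobNorm.comp hs
  refine ⟨hf.locallyIntegrableOn hΩ.measurableSet, fun C hC hCΩ => ?_,
    fun x j i => s x j i / frobNorm (s x), ?_, ?_, withDensity_absolutelyContinuous _ _ hμΩ,
    fun φ hφ j i => ?_⟩
  · rw [withDensity_apply _ hC.measurableSet]
    calc ∫⁻ x in C, ENNReal.ofReal (frobNorm (s x)) ∂μ ≤ ∫⁻ _ in C, ENNReal.ofReal B ∂μ := by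
          gcongr with x; exact hsB x
      _ < ∞ := by simpa using ENNReal.mul_lt_top ENNReal.ofReal_lt_top (hμ C hC hCΩ)
  · fun_prop
  · rw [ae_withDensity_iff hN.ennreal_ofReal]
    refine .of_forall fun x hx => ?_
    rw [frobNorm_div _ (frobNorm_nonneg _), div_self]
    exact fun h0 => hx (by simp [h0])
  · rw [h j i φ hφ, integral_withDensity_eq_integral_toReal_smul hN.ennreal_ofReal (by simp)]
    congr with x
    rw [ENNReal.toReal_ofReal (frobNorm_nonneg _), smul_eq_mul, mul_left_comm,
      mul_div_cancel_of_imp']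
    exact fun h0 => abs_nonpos_iff.1 ((abs_le_frobNorm _ j i).trans_eq h0)

end DistributionalDerivative

theorem lipschitzWith_euclidean_apply {n : ℕ} (j : Fin n) : LipschitzWith 1 fun x : En n => x j :=
  .of_dist_le_mul fun x y => by
    simpa [dist_eq_norm] using PiLp.norm_apply_le (x - y) j

/-- The image under the inverse homeomorphism `g` of Lebesgue measure on `Ω`. -/
def pushforwardVolume {n : ℕ} (g : En n → En n) (Ω : Set (En n)) : Measure (En n) :=
  (volume.restrict Ω).map g

namespace IsHomeoOn

variable {n : ℕ} {f g : En n → En n} {Ω₁ Ω₂ : Set (En n)}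

theorem measurableSet_preimage_inter (hf : IsHomeoOn f g Ω₁ Ω₂) (hΩ₁ : MeasurableSet Ω₁)
    {A : Set (En n)} (hA : MeasurableSet A) : MeasurableSet (f ⁻¹' A ∩ Ω₁) := by
  have := hΩ₁.subtype_image (hf.1.domRestrict.measurable hA)
  rwa [domRestrict_eq, preimage_comp, Subtype.image_preimage_coe, inter_comm] at this

theorem pushforwardVolume_apply (hf : IsHomeoOn f g Ω₁ Ω₂) (hΩ₂ : MeasurableSet Ω₂)
    {B : Set (En n)} (hB : MeasurableSet B) :
    pushforwardVolume g Ω₂ B = volume (g ⁻¹' B ∩ Ω₂) := by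
  have hg : AEMeasurable g (volume.restrict Ω₂) := hf.2.1.aemeasurable hΩ₂
  rw [pushforwardVolume, Measure.map_apply_of_aemeasurable hg hB, Measure.restrict_apply' hΩ₂]

theorem pushforwardVolume_preimage_le (hf : IsHomeoOn f g Ω₁ Ω₂) (hΩ₁ : MeasurableSet Ω₁)
    (hΩ₂ : MeasurableSet Ω₂) {A : Set (En n)} (hA : MeasurableSet A) :
    pushforwardVolume g Ω₂ (f ⁻¹' A ∩ Ω₁) ≤ volume A := by
  rw [hf.pushforwardVolume_apply hΩ₂ (hf.measurableSet_preimage_inter hΩ₁ hA)]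
  obtain ⟨-, -, -, -, -, hfg⟩ := hf
  exact measure_mono fun y hy => hfg y hy.2 ▸ hy.1.1

theorem pushforwardVolume_compl (hf : IsHomeoOn f g Ω₁ Ω₂) (hΩ₁ : MeasurableSet Ω₁)
    (hΩ₂ : MeasurableSet Ω₂) : pushforwardVolume g Ω₂ Ω₁ᶜ = 0 := by
  rw [hf.pushforwardVolume_apply hΩ₂ hΩ₁.compl]
  obtain ⟨-, -, -, hgm, -⟩ := hf
  convert measure_empty (μ := volume)
  exact eq_empty_of_forall_notMem fun y hy => hy.1 (hgm hy.2)

theorem pushforwardVolume_lt_top (hf : IsHomeoOn f g Ω₁ Ω₂) (hΩ₂ : MeasurableSet Ω₂)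
    {C : Set (En n)} (hC : IsCompact C) (hCΩ : C ⊆ Ω₁) : pushforwardVolume g Ω₂ C < ∞ := by
  rw [hf.pushforwardVolume_apply hΩ₂ hC.measurableSet]
  obtain ⟨hfc, -, -, -, -, hfg⟩ := hf
  refine (measure_mono fun y hy => ?_).trans_lt
    (hC.image_of_continuousOn (hfc.mono hCΩ)).measure_lt_top
  exact ⟨g y, hy.1, hfg y hy.2⟩

theorem sigmaFinite_pushforwardVolume (hf : IsHomeoOn f g Ω₁ Ω₂) (hΩ₁ : MeasurableSet Ω₁)
    (hΩ₂ : MeasurableSet Ω₂) : SigmaFinite (pushforwardVolume g Ω₂) := by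
  refine ⟨⟨⟨fun k => f ⁻¹' ball 0 k ∩ Ω₁ ∪ Ω₁ᶜ, fun _ => trivial, fun k => ?_, ?_⟩⟩⟩
  · exact measure_union_lt_top ((hf.pushforwardVolume_preimage_le hΩ₁ hΩ₂
      measurableSet_ball).trans_lt measure_ball_lt_top)
      (by simp [hf.pushforwardVolume_compl hΩ₁ hΩ₂])
  · rw [← iUnion_union, ← iUnion_inter, ← preimage_iUnion, iUnion_ball_nat, preimage_univ,
      univ_inter, union_compl_self]

theorem enorm_setIntegral_mul_fderiv_le (hf : IsHomeoOn f g Ω₁ Ω₂) (hΩ₁ : IsOpen Ω₁)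
    (hΩ₂ : MeasurableSet Ω₂) {L : ℝ≥0} (hg : LocallyLipschitzOnWith L g Ω₂) {φ : En n → ℝ}
    (hφ : SmoothTest Ω₁ φ) (j i : Fin n) :
    ‖∫ x in Ω₁, f x j * fderiv ℝ φ x (EuclideanSpace.single i 1)‖ₑ ≤
      ((L + 1) ^ (n + 1) : ℝ≥0) * ∫⁻ x, ‖φ x‖ₑ ∂pushforwardVolume g Ω₂ := by
  obtain ⟨hfc, hgc, hfm, -, hgf, hfg⟩ := hf
  rw [pushforwardVolume, lintegral_map' hφ.1.continuous.measurable.enorm.aemeasurable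
    (hgc.aemeasurable hΩ₂)]
  simpa using enorm_setIntegral_comp_mul_fderiv_le (μ := volume) hΩ₁ hΩ₂ hfc hfm ⟨hgf, hfg⟩ hg
    (lipschitzWith_euclidean_apply j) (e := EuclideanSpace.single i 1) (by simp)
    (hφ.1.of_le (by simp)) hφ.2.1 hφ.2.2

theorem exists_memBVloc_and_measure_preimage_le (hf : IsHomeoOn f g Ω₁ Ω₂) (hΩ₁ : IsOpen Ω₁)
    (hΩ₂ : MeasurableSet Ω₂) {L : ℝ≥0} (hg : LocallyLipschitzOnWith L g Ω₂) :
    ∃ ν : Measure (En n), MemBVloc Ω₁ f ν ∧ ∃ K : ℝ, 0 < K ∧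
      ∀ A, MeasurableSet A → ν (f ⁻¹' A ∩ Ω₁) ≤ ENNReal.ofReal K * volume A := by
  let μ := pushforwardVolume g Ω₂
  have hμ : SigmaFinite μ := hf.sigmaFinite_pushforwardVolume hΩ₁.measurableSet hΩ₂
  have hμC : ∀ C, IsCompact C → C ⊆ Ω₁ → μ C < ∞ := fun _ => hf.pushforwardVolume_lt_top hΩ₂
  have hdensity := fun j i => exists_hasDistribDeriv_of_enorm_le
    ((lipschitzWith_euclidean_apply j).continuous.comp_continuousOn hf.1) hμC fun φ hφ =>
      hf.enorm_setIntegral_mul_fderiv_le hΩ₁ hΩ₂ hg hφ j i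
  choose s hs hsL hfs using hdensity
  let σ : En n → Fin n → Fin n → ℝ := fun x j i => s j i x
  have hσ : Measurable σ := by fun_prop
  let K : ℝ := √(n * n * (((L + 1) ^ (n + 1) : ℝ≥0) : ℝ) ^ 2) + 1
  have hσK : ∀ x, frobNorm (σ x) ≤ K := fun x =>
    (frobNorm_le_of_forall_abs_le fun j i => hsL j i x).trans (le_add_of_nonneg_right zero_le_one)
  refine ⟨_, memBVloc_withDensity_frobNorm hΩ₁ hf.1
    (hf.pushforwardVolume_compl hΩ₁.measurableSet hΩ₂) hμC hσ hσK hfs, K, by positivity,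
    fun A hA => ?_⟩
  calc μ.withDensity (fun x => ENNReal.ofReal (frobNorm (σ x))) (f ⁻¹' A ∩ Ω₁)
      ≤ μ.withDensity (fun _ => ENNReal.ofReal K) (f ⁻¹' A ∩ Ω₁) :=
        withDensity_mono (.of_forall fun x => ENNReal.ofReal_le_ofReal (hσK x)) _
    _ = ENNReal.ofReal K * μ (f ⁻¹' A ∩ Ω₁) := by simp [withDensity_const]
    _ ≤ ENNReal.ofReal K * volume A :=
        mul_le_mul' le_rfl (hf.pushforwardVolume_preimage_le hΩ₁.measurableSet hΩ₂ hA)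

end IsHomeoOn

section Mollification

open scoped Convolution

variable {n : ℕ} {ρ w u : En n → ℝ} {e : En n} {ε : ℝ}

theorem fderiv_convolution_eq_neg_integral (hρ : ContDiff ℝ 1 ρ) (hρc : HasCompactSupport ρ)
    (hw : LocallyIntegrable w) (x e : En n) :
    fderiv ℝ (ρ ⋆[ContinuousLinearMap.lsmul ℝ ℝ] w) x e =
      -∫ z, w z * fderiv ℝ (fun z => ρ (x - z)) z e := by
  have hexists : ConvolutionExistsAt (fderiv ℝ ρ) w x
      ((ContinuousLinearMap.lsmul ℝ ℝ : ℝ →L[ℝ] ℝ →L[ℝ] ℝ).precompL (En n)) volume :=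
    (hρc.fderiv ℝ).convolutionExists_left _ (hρ.continuous_fderiv one_ne_zero) hw x
  rw [(hρc.hasFDerivAt_convolution_left _ hρ hw x).fderiv, convolution_eq_swap,
    ContinuousLinearMap.integral_apply hexists.integrable_swap, ← integral_neg]
  congr with z
  have hchain : HasFDerivAt (fun z => ρ (x - z))
      ((fderiv ℝ ρ (x - z)).comp (-ContinuousLinearMap.id ℝ (En n))) z :=
    (hρ.differentiable one_ne_zero (x - z)).hasFDerivAt.comp z ((hasFDerivAt_id z).const_sub x)
  simp [hchain.fderiv, mul_comm]

theorem tsupport_comp_const_sub_subset (hρε : Function.support ρ ⊆ closedBall 0 ε) (x : En n) :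
    tsupport (fun z => ρ (x - z)) ⊆ closedBall x ε :=
  closure_minimal (fun z hz => by simpa [dist_eq_norm, norm_sub_rev] using hρε hz)
    isClosed_closedBall

theorem smoothTest_comp_const_sub (hρ : ContDiff ℝ (⊤ : ℕ∞) ρ)
    (hρε : Function.support ρ ⊆ closedBall 0 ε) {Ω : Set (En n)} {x : En n}
    (hx : closedBall x ε ⊆ Ω) : SmoothTest Ω fun z => ρ (x - z) :=
  ⟨hρ.comp (contDiff_const.sub contDiff_id),
    (isCompact_closedBall x ε).of_isClosed_subset isClosed_closure
      (tsupport_comp_const_sub_subset hρε x),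
    (tsupport_comp_const_sub_subset hρε x).trans hx⟩

theorem HasDistribDeriv.fderiv_convolution_eq_integral {Ω : Set (En n)} {s : En n → ℝ}
    {ν : Measure (En n)} (h : HasDistribDeriv Ω u e s ν) (hρ : ContDiff ℝ (⊤ : ℕ∞) ρ)
    (hρε : Function.support ρ ⊆ closedBall 0 ε) (hw : LocallyIntegrable w) {x : En n}
    (hx : closedBall x ε ⊆ Ω) (hwu : EqOn w u (closedBall x ε)) :
    fderiv ℝ (ρ ⋆[ContinuousLinearMap.lsmul ℝ ℝ] w) x e = ∫ z, ρ (x - z) * s z ∂ν := by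
  have hzero : ∀ z ∉ closedBall x ε, fderiv ℝ (fun z => ρ (x - z)) z = 0 := fun z hz =>
    fderiv_of_notMem_tsupport ℝ fun hmem => hz (tsupport_comp_const_sub_subset hρε x hmem)
  have hρc : HasCompactSupport ρ := .of_support_subset_isCompact (isCompact_closedBall 0 ε) hρε
  rw [fderiv_convolution_eq_neg_integral (hρ.of_le (by simp)) hρc hw, neg_eq_iff_eq_neg,
    ← h _ (smoothTest_comp_const_sub hρ hρε hx),
    setIntegral_eq_integral_of_forall_compl_eq_zero fun z hz => by
      rw [hzero z fun hmem => hz (hx hmem)]; simp]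
  congr with z
  by_cases hz : z ∈ closedBall x ε
  · rw [hwu hz]
  · simp [hzero z hz]

theorem lintegral_enorm_integral_comp_sub_mul_le (hρ : Continuous ρ)
    (hρε : Function.support ρ ⊆ closedBall 0 ε) (hρ₁ : ∫⁻ x, ‖ρ x‖ₑ = 1) {s : En n → ℝ}
    {ν : Measure (En n)} (hs : ∀ᵐ z ∂ν, |s z| ≤ 1) {C T : Set (En n)} (hC : MeasurableSet C)
    (hν : ν T < ∞) (hCT : ∀ x ∈ C, closedBall x ε ⊆ T) :
    ∫⁻ x in C, ‖∫ z, ρ (x - z) * s z ∂ν‖ₑ ≤ ν T := by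
  have : IsFiniteMeasure (ν.restrict T) := ⟨by simpa using hν⟩
  have hpoint : ∀ x ∈ C, ‖∫ z, ρ (x - z) * s z ∂ν‖ₑ ≤ ∫⁻ z in T, ‖ρ (x - z)‖ₑ ∂ν := fun x hx => by
    rw [← setIntegral_eq_integral_of_forall_compl_eq_zero (s := T)]
    · refine (enorm_integral_le_lintegral_enorm _).trans (lintegral_mono_ae ?_)
      filter_upwards [ae_restrict_of_ae hs] with z hz
      rw [enorm_mul]
      exact mul_le_of_le_one_right' (by simpa [Real.enorm_eq_ofReal_abs] using hz)
    · intro z hz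
      rw [image_eq_zero_of_notMem_tsupport fun hmem =>
        hz (hCT x hx (tsupport_comp_const_sub_subset hρε x hmem)), zero_mul]
  calc ∫⁻ x in C, ‖∫ z, ρ (x - z) * s z ∂ν‖ₑ
      ≤ ∫⁻ x in C, ∫⁻ z in T, ‖ρ (x - z)‖ₑ ∂ν := setLIntegral_mono' hC hpoint
    _ ≤ ∫⁻ x, ∫⁻ z in T, ‖ρ (x - z)‖ₑ ∂ν := setLIntegral_le_lintegral _ _
    _ = ∫⁻ z in T, (∫⁻ x, ‖ρ (x - z)‖ₑ) ∂ν :=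
        lintegral_lintegral_swap (by fun_prop)
    _ = ν T := by
        simp only [lintegral_sub_right_eq_self fun x => ‖ρ x‖ₑ, hρ₁, setLIntegral_one]

theorem lintegral_enorm_contDiffBump_normed (b : ContDiffBump (0 : En n)) :
    ∫⁻ x, ‖b.normed volume x‖ₑ = 1 := by
  simp only [Real.enorm_of_nonneg (b.nonneg_normed _)]
  rw [← ofReal_integral_eq_lintegral_ofReal b.integrable_normed (.of_forall b.nonneg_normed),
    b.integral_normed, ENNReal.ofReal_one]

theorem exists_contDiff_approx_of_hasDistribDeriv {Ω : Set (En n)} (hu : ContinuousOn u Ω)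
    {ν : Measure (En n)} {C : Set (En n)} (hC : IsCompact C) {δ : ℝ} (hδ : 0 < δ)
    (hCΩ : cthickening δ C ⊆ Ω) (hν : ν (cthickening δ C) < ∞) {η : ℝ} (hη : 0 < η) :
    ∃ F : En n → ℝ, ContDiff ℝ 1 F ∧ (∀ x ∈ C, |F x - u x| ≤ η) ∧
      ∀ e s, HasDistribDeriv Ω u e s ν → (∀ᵐ x ∂ν, |s x| ≤ 1) →
        ∫⁻ x in C, ‖fderiv ℝ F x e‖ₑ ≤ ν (cthickening δ C) := by
  let T := cthickening δ C
  have hT : IsCompact T := hC.cthickening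
  have huT : ContinuousOn u T := hu.mono hCΩ
  have hCT : C ⊆ T := self_subset_cthickening C
  have hw : Integrable (T.indicator u) :=
    (integrable_indicator_iff hT.measurableSet).2 (huT.integrableOn_compact hT)
  obtain ⟨r, hr, hru⟩ := uniformContinuousOn_iff.1 (hT.uniformContinuousOn_of_continuous huT) η hη
  let b : ContDiffBump (0 : En n) :=
    ⟨min r δ / 2, min r δ, by positivity, half_lt_self (by positivity)⟩
  have hbT : ∀ x ∈ C, closedBall x b.rOut ⊆ T := fun x hx =>
    (closedBall_subset_closedBall (min_le_right r δ)).trans (closedBall_subset_cthickening hx δ)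
  have hb : Function.support (b.normed volume) ⊆ closedBall 0 b.rOut :=
    b.support_normed_eq.trans_subset ball_subset_closedBall
  refine ⟨b.normed volume ⋆[ContinuousLinearMap.lsmul ℝ ℝ] T.indicator u,
    b.hasCompactSupport_normed.contDiff_convolution_left _ b.contDiff_normed hw.locallyIntegrable,
    fun x hx => ?_, fun e s h hs => ?_⟩
  · have := b.dist_normed_convolution_le (x₀ := x) (ε := η) hw.aestronglyMeasurable fun y hy => by
      have hyT := hbT x hx (ball_subset_closedBall hy)
      rw [indicator_of_mem hyT, indicator_of_mem (hCT hx)]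
      exact (hru y hyT x (hCT hx) (lt_of_lt_of_le hy (min_le_left r δ))).le
    rwa [indicator_of_mem (hCT hx), Real.dist_eq] at this
  · rw [setLIntegral_congr_fun hC.measurableSet fun x hx => by
      rw [h.fderiv_convolution_eq_integral b.contDiff_normed hb hw.locallyIntegrable
        ((hbT x hx).trans hCΩ) fun z hz => indicator_of_mem (hbT x hx hz) u]]
    exact lintegral_enorm_integral_comp_sub_mul_le b.continuous_normed hb
      (lintegral_enorm_contDiffBump_normed b) hs hC.measurableSet hν hbT

end Mollification

section LineIntegrals

theorem exists_first_exit {X : Type*} [TopologicalSpace X] {γ : ℝ → X} (hγ : Continuous γ)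
    {O G : Set X} (hO : IsOpen O) (hG : IsClosed G) (hOG : O ⊆ G) (h0 : γ 0 ∈ O) {b : ℝ}
    (hb : 0 ≤ b) (hγb : γ b ∉ O) :
    ∃ τ, 0 ≤ τ ∧ γ τ ∉ O ∧ ∀ t ∈ Icc 0 τ, γ t ∈ G := by
  have hS : IsCompact (Icc 0 b ∩ γ ⁻¹' Oᶜ) :=
    isCompact_Icc.inter_right (hO.isClosed_compl.preimage hγ)
  obtain ⟨τ, ⟨hτ, hτO⟩, hleast⟩ := hS.exists_isLeast ⟨b, right_mem_Icc.2 hb, hγb⟩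
  have hne : 0 ≠ τ := fun h => hτO (h ▸ h0)
  have hsub : Ico 0 τ ⊆ γ ⁻¹' G := fun t ht => hOG <| by
    by_contra h
    exact ht.2.not_ge (hleast ⟨⟨ht.1, ht.2.le.trans hτ.2⟩, h⟩)
  refine ⟨τ, hτ.1, hτO, fun t ht => ?_⟩
  exact closure_minimal hsub (hG.preimage hγ) (by rwa [closure_Ico hne])

theorem exists_first_exit_of_isCompact {E : Type*} [NormedAddCommGroup E] [NormedSpace ℝ E]
    {O G : Set E} (hO : IsOpen O) (hG : IsCompact G) (hOG : O ⊆ G) {x e : E} (he : ‖e‖ = 1)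
    (hx : x ∈ O) : ∃ τ : ℝ, 0 ≤ τ ∧ x + τ • e ∉ O ∧ ∀ t ∈ Icc 0 τ, x + t • e ∈ G := by
  obtain ⟨R, hR⟩ := hG.isBounded.subset_closedBall x
  refine exists_first_exit (by fun_prop : Continuous fun t : ℝ => x + t • e) hO hG.isClosed hOG
    (by simpa) (b := |R| + 1) (by positivity) fun h => ?_
  have hle : |(|R| + 1)| ≤ R := by simpa [norm_smul, he] using hR (hOG h)
  linarith [le_abs_self R, le_abs_self (|R| + 1)]

theorem ofReal_abs_sub_le_lintegral_line {E : Type*} [NormedAddCommGroup E] [NormedSpace ℝ E]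
    {F : E → ℝ} (hF : ContDiff ℝ 1 F) {x e : E} {G : Set E} {τ : ℝ} (hτ : 0 ≤ τ)
    (hG : ∀ t ∈ Icc 0 τ, x + t • e ∈ G) :
    ENNReal.ofReal |F (x + τ • e) - F x| ≤
      ∫⁻ t : ℝ, G.indicator (fun p => ‖fderiv ℝ F p e‖ₑ) (x + t • e) := by
  have hderiv : ∀ t : ℝ, HasDerivAt (fun t : ℝ => F (x + t • e)) (fderiv ℝ F (x + t • e) e) t :=
    fun t => (hF.differentiable one_ne_zero _).hasFDerivAt.comp_hasDerivAt t <| by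
      simpa using ((hasDerivAt_id t).smul_const e).const_add x
  have hcont : Continuous fun t : ℝ => fderiv ℝ F (x + t • e) e :=
    ((hF.continuous_fderiv one_ne_zero).comp (by fun_prop)).clm_apply continuous_const
  have hftc := intervalIntegral.integral_eq_sub_of_hasDerivAt (a := 0) (b := τ)
    (fun t _ => hderiv t) (hcont.intervalIntegrable _ _)
  simp only [zero_smul, add_zero] at hftc
  rw [← hftc, ← Real.enorm_eq_ofReal_abs, intervalIntegral.integral_of_le hτ]
  refine (enorm_integral_le_lintegral_enorm _).trans ?_
  rw [← lintegral_indicator measurableSet_Ioc]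
  refine lintegral_mono fun t => ?_
  by_cases ht : t ∈ Ioc 0 τ
  · rw [indicator_of_mem ht, indicator_of_mem (hG t ⟨ht.1.le, ht.2⟩)]
  · rw [indicator_of_notMem ht]
    exact zero_le

end LineIntegrals

section PlanarFubini

variable {i k : Fin 2}

theorem measurePreserving_smul_single_add_smul_single (hik : i ≠ k) :
    MeasurePreserving (fun p : ℝ × ℝ =>
      (p.1 • EuclideanSpace.single k 1 + p.2 • EuclideanSpace.single i 1 : En 2)) := by
  have htoLp : MeasurePreserving fun p : ℝ × ℝ => (!₂[p.1, p.2] : En 2) :=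
    (PiLp.volume_preserving_toLp (Fin 2)).comp ((volume_preserving_finTwoArrow ℝ).symm _)
  have hswap : MeasurePreserving (Prod.swap : ℝ × ℝ → ℝ × ℝ) := Measure.measurePreserving_swap
  fin_cases i <;> fin_cases k <;> simp only [ne_eq, not_true_eq_false] at hik
  · convert htoLp.comp hswap using 1
    ext p m
    fin_cases m <;> simp
  · convert htoLp using 1
    ext p m
    fin_cases m <;> simp

theorem lintegral_smul_single_add_smul_single (hik : i ≠ k) {w : En 2 → ℝ≥0∞} (hw : Measurable w) :
    ∫⁻ s : ℝ, ∫⁻ t : ℝ, w (s • EuclideanSpace.single k 1 + t • EuclideanSpace.single i 1) =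
      ∫⁻ x, w x := by
  have h := measurePreserving_smul_single_add_smul_single hik
  rw [← h.lintegral_comp hw]
  exact (lintegral_prod _ (hw.comp h.measurable).aemeasurable).symm

theorem lintegral_line_eq (hik : i ≠ k) (w : En 2 → ℝ≥0∞) (x : En 2) :
    ∫⁻ t : ℝ, w (x + t • EuclideanSpace.single i 1) =
      ∫⁻ t : ℝ, w (x k • EuclideanSpace.single k 1 + t • EuclideanSpace.single i 1) := by
  have hx : x = x k • EuclideanSpace.single k 1 + x i • EuclideanSpace.single i 1 := by
    ext m
    fin_cases i <;> fin_cases k <;> fin_cases m <;> simp at hik ⊢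
  conv_rhs => rw [← lintegral_add_left_eq_self _ (x i)]
  congr with t
  rw [add_smul, ← add_assoc, ← hx]

theorem ofReal_mul_volume_le_sum_lintegral {ι : Type*} [Fintype ι] (hik : i ≠ k)
    {F : ι → En 2 → ℝ} (hF : ∀ j, ContDiff ℝ 1 (F j)) {G : Set (En 2)} (hG : MeasurableSet G)
    {J : Set ℝ} {c : ℝ} (hJ : ∀ s ∈ J, ∃ x : En 2, x k = s ∧ ∃ τ : ℝ, 0 ≤ τ ∧
      (∀ t ∈ Icc 0 τ, x + t • EuclideanSpace.single i 1 ∈ G) ∧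
      c ≤ ∑ j, |F j (x + τ • EuclideanSpace.single i 1) - F j x|) :
    ENNReal.ofReal c * volume J ≤
      ∑ j, ∫⁻ x in G, ‖fderiv ℝ (F j) x (EuclideanSpace.single i 1)‖ₑ := by
  let e : En 2 := EuclideanSpace.single i 1
  let w : ι → En 2 → ℝ≥0∞ := fun j => G.indicator fun x => ‖fderiv ℝ (F j) x e‖ₑ
  have hw : ∀ j, Measurable (w j) := fun j =>
    Measurable.indicator (((hF j).continuous_fderiv one_ne_zero).clm_apply
      continuous_const).measurable.enorm hG
  let W : En 2 → ℝ≥0∞ := fun x => ∑ j, w j x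
  have hW : Measurable W := by fun_prop
  have hline : ∀ s ∈ J, ENNReal.ofReal c ≤
      ∫⁻ t : ℝ, W (s • EuclideanSpace.single k 1 + t • e) := by
    intro s hs
    obtain ⟨x, rfl, τ, hτ, hxG, hc⟩ := hJ s hs
    rw [← lintegral_line_eq hik]
    calc ENNReal.ofReal c ≤ ∑ j, ENNReal.ofReal |F j (x + τ • e) - F j x| := by
          rw [← ENNReal.ofReal_sum_of_nonneg fun _ _ => abs_nonneg _]
          exact ENNReal.ofReal_le_ofReal hc
      _ ≤ ∑ j, ∫⁻ t : ℝ, w j (x + t • e) :=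
          Finset.sum_le_sum fun j _ => ofReal_abs_sub_le_lintegral_line (hF j) hτ hxG
      _ = ∫⁻ t : ℝ, W (x + t • e) :=
          (lintegral_finsetSum _ fun j _ => by fun_prop).symm
  calc ENNReal.ofReal c * volume J
      ≤ ∫⁻ s, ∫⁻ t : ℝ, W (s • EuclideanSpace.single k 1 + t • e) := by
        refine le_trans ?_ (setLIntegral_le_lintegral J _)
        rw [← setLIntegral_const]
        refine setLIntegral_mono ?_ hline
        exact (hW.comp
          (measurePreserving_smul_single_add_smul_single hik).measurable).lintegral_prod_right'
    _ = ∫⁻ x, W x := lintegral_smul_single_add_smul_single hik hW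
    _ = ∑ j, ∫⁻ x in G, ‖fderiv ℝ (F j) x e‖ₑ := by
        rw [lintegral_finsetSum _ fun j _ => hw j]
        simp only [w, lintegral_indicator hG]

end PlanarFubini

section InverseLipschitz

theorem dist_le_sum_abs_sub {n : ℕ} (p q : En n) : dist p q ≤ ∑ j, |p j - q j| := by
  rw [dist_eq_norm]
  conv_lhs => rw [← (EuclideanSpace.basisFun (Fin n) ℝ).sum_repr (p - q)]
  refine (norm_sum_le _ _).trans_eq (Finset.sum_congr rfl fun j _ => ?_)
  simp [norm_smul]

namespace IsHomeoOn

theorem image_eq_preimage_inter {n : ℕ} {f g : En n → En n} {Ω₁ Ω₂ A : Set (En n)}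
    (hf : IsHomeoOn f g Ω₁ Ω₂) (hA : A ⊆ Ω₂) : g '' A = f ⁻¹' A ∩ Ω₁ := by
  obtain ⟨-, -, -, hgm, hgf, hfg⟩ := hf
  ext x
  constructor
  · rintro ⟨y, hy, rfl⟩
    exact ⟨by rwa [mem_preimage, hfg y (hA hy)], hgm (hA hy)⟩
  · exact fun hx => ⟨f x, hx.1, hgf x hx.2⟩

theorem exists_first_exit_image_closedBall {n : ℕ} {f g : En n → En n} {Ω₁ Ω₂ : Set (En n)}
    (hf : IsHomeoOn f g Ω₁ Ω₂) (hΩ₁ : IsOpen Ω₁) {y w : En n} {R : ℝ} (hR : closedBall y R ⊆ Ω₂)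
    (hw : w ∈ ball y R) {e : En n} (he : ‖e‖ = 1) :
    ∃ τ : ℝ, 0 ≤ τ ∧ (∀ t ∈ Icc 0 τ, g w + t • e ∈ g '' closedBall y R) ∧
      R ≤ dist (f (g w + τ • e)) y := by
  have hball := hf.image_eq_preimage_inter (ball_subset_closedBall.trans hR)
  have hopen : IsOpen (g '' ball y R) := by
    rw [hball, inter_comm]
    exact hf.1.isOpen_inter_preimage hΩ₁ isOpen_ball
  have hcompact : IsCompact (g '' closedBall y R) :=
    (isCompact_closedBall y R).image_of_continuousOn (hf.2.1.mono hR)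
  obtain ⟨τ, hτ, hexit, hstay⟩ := exists_first_exit_of_isCompact hopen hcompact
    (image_mono ball_subset_closedBall) he (mem_image_of_mem g hw)
  refine ⟨τ, hτ, hstay, not_lt.1 fun hlt => hexit ?_⟩
  rw [hball]
  have hmem := hstay τ (right_mem_Icc.2 hτ)
  rw [hf.image_eq_preimage_inter hR] at hmem
  exact ⟨hlt, hmem.2⟩

variable {f g : En 2 → En 2} {Ω₁ Ω₂ : Set (En 2)} {ν : Measure (En 2)} {y : En 2} {r : ℝ}

theorem le_sum_abs_sub_of_exit (hf : IsHomeoOn f g Ω₁ Ω₂) {w p : En 2}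
    (hy : closedBall y (3 * r) ⊆ Ω₂) (hr : 0 ≤ r) (hw : w ∈ closedBall y r)
    (hp : p ∈ g '' closedBall y (3 * r)) (hpy : 3 * r ≤ dist (f p) y) {F : Fin 2 → En 2 → ℝ}
    (hFf : ∀ j, ∀ x ∈ g '' closedBall y (3 * r), |F j x - f x j| ≤ r / 4) :
    r ≤ ∑ j, |F j p - F j (g w)| := by
  have hw' : w ∈ closedBall y (3 * r) := closedBall_subset_closedBall (by linarith) hw
  have hdist : 2 * r ≤ dist (f p) w := by
    have := dist_triangle (f p) w y
    rw [mem_closedBall] at hw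
    linarith
  have hcoord : ∀ j, |f p j - w j| ≤ |F j p - F j (g w)| + r / 2 := fun j => by
    have h₁ := abs_le.1 (hFf j p hp)
    have h₂ := abs_le.1 (hFf j (g w) (mem_image_of_mem g hw'))
    rw [hf.2.2.2.2.2 w (hy hw')] at h₂
    cases abs_cases (f p j - w j) <;> cases abs_cases (F j p - F j (g w)) <;> linarith
  have hsum := (hdist.trans (dist_le_sum_abs_sub _ _)).trans (Finset.sum_le_sum fun j _ => hcoord j)
  simp only [Fin.sum_univ_two] at hsum ⊢
  linarith

theorem ofReal_mul_volume_image_le_sum_lintegral (hf : IsHomeoOn f g Ω₁ Ω₂) (hΩ₁ : IsOpen Ω₁)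
    (hr : 0 < r) (hy : closedBall y (3 * r) ⊆ Ω₂) {i k : Fin 2} (hik : i ≠ k)
    {F : Fin 2 → En 2 → ℝ} (hF : ∀ j, ContDiff ℝ 1 (F j))
    (hFf : ∀ j, ∀ x ∈ g '' closedBall y (3 * r), |F j x - f x j| ≤ r / 4) :
    ENNReal.ofReal r * volume ((fun w => g w k) '' closedBall y r) ≤
      ∑ j, ∫⁻ x in g '' closedBall y (3 * r),
        ‖fderiv ℝ (F j) x (EuclideanSpace.single i 1)‖ₑ := by
  have hcompact : IsCompact (g '' closedBall y (3 * r)) :=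
    (isCompact_closedBall y _).image_of_continuousOn (hf.2.1.mono hy)
  refine ofReal_mul_volume_le_sum_lintegral hik hF hcompact.measurableSet ?_
  rintro _ ⟨w, hw, rfl⟩
  have hw' : w ∈ ball y (3 * r) := closedBall_subset_ball (by linarith) hw
  obtain ⟨τ, hτ, hstay, hexit⟩ := hf.exists_first_exit_image_closedBall hΩ₁ hy hw'
    (e := EuclideanSpace.single i 1) (by simp)
  exact ⟨g w, rfl, τ, hτ, hstay, hf.le_sum_abs_sub_of_exit hy hr.le hw
    (hstay τ (right_mem_Icc.2 hτ)) hexit hFf⟩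

theorem ofReal_mul_volume_image_le_measure_preimage (hf : IsHomeoOn f g Ω₁ Ω₂)
    (hΩ₁ : IsOpen Ω₁) (hν : MemBVloc Ω₁ f ν) (hr : 0 < r) (hy : ball y (4 * r) ⊆ Ω₂) (k : Fin 2) :
    ENNReal.ofReal r * volume ((fun w => g w k) '' closedBall y r) ≤
      2 * ν (f ⁻¹' ball y (4 * r) ∩ Ω₁) := by
  obtain ⟨i, hik⟩ := exists_ne k
  obtain ⟨-, hfin, σ, -, hσ, -, hdiv⟩ := hν
  have hsub : closedBall y (3 * r) ⊆ ball y (4 * r) := closedBall_subset_ball (by linarith)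
  have hG : IsCompact (g '' closedBall y (3 * r)) :=
    (isCompact_closedBall y _).image_of_continuousOn (hf.2.1.mono (hsub.trans hy))
  have hU : IsOpen (f ⁻¹' ball y (4 * r) ∩ Ω₁) := by
    rw [inter_comm]
    exact hf.1.isOpen_inter_preimage hΩ₁ isOpen_ball
  have hGU : g '' closedBall y (3 * r) ⊆ f ⁻¹' ball y (4 * r) ∩ Ω₁ :=
    hf.image_eq_preimage_inter hy ▸ image_mono hsub
  obtain ⟨δ, hδ, hδU⟩ := hG.exists_cthickening_subset_open hU hGU
  have hδΩ := hδU.trans inter_subset_right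
  choose F hF hFf hFint using fun j => exists_contDiff_approx_of_hasDistribDeriv
    ((lipschitzWith_euclidean_apply j).continuous.comp_continuousOn hf.1) hG hδ hδΩ
    (hfin _ hG.cthickening hδΩ) (by positivity : 0 < r / 4)
  calc ENNReal.ofReal r * volume ((fun w => g w k) '' closedBall y r)
      ≤ ∑ j, ∫⁻ x in g '' closedBall y (3 * r),
          ‖fderiv ℝ (F j) x (EuclideanSpace.single i 1)‖ₑ :=
        hf.ofReal_mul_volume_image_le_sum_lintegral hΩ₁ hr (hsub.trans hy) hik hF hFf
    _ ≤ ∑ _j : Fin 2, ν (f ⁻¹' ball y (4 * r) ∩ Ω₁) := by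
        refine Finset.sum_le_sum fun j _ => (hFint j _ (fun x => σ x j i) ?_ ?_).trans
          (measure_mono hδU)
        · exact fun φ hφ => hdiv φ hφ j i
        · filter_upwards [hσ] with x hx using hx ▸ abs_le_frobNorm (σ x) j i
    _ = 2 * ν (f ⁻¹' ball y (4 * r) ∩ Ω₁) := by simp

theorem abs_apply_sub_le (hf : IsHomeoOn f g Ω₁ Ω₂) (hΩ₁ : IsOpen Ω₁)
    (hν : MemBVloc Ω₁ f ν) (hr : 0 < r) (hy : ball y (4 * r) ⊆ Ω₂) {K : ℝ} (hK : 0 ≤ K)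
    (hKν : ν (f ⁻¹' ball y (4 * r) ∩ Ω₁) ≤ ENNReal.ofReal K * volume (ball y (4 * r)))
    {z : En 2} (hz : z ∈ closedBall y r) (k : Fin 2) :
    |g z k - g y k| ≤ 32 * Real.pi * K * r := by
  have hcont : ContinuousOn (fun w => g w k) (closedBall y r) :=
    (lipschitzWith_euclidean_apply k).continuous.comp_continuousOn
      (hf.2.1.mono ((closedBall_subset_ball (by linarith)).trans hy))
  have huIcc : uIcc (g y k) (g z k) ⊆ (fun w => g w k) '' closedBall y r :=
    ((convex_closedBall y r).isPreconnected.image _ hcont).ordConnected.uIcc_subset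
      (mem_image_of_mem _ (mem_closedBall_self hr.le)) (mem_image_of_mem _ hz)
  have hle : ENNReal.ofReal (r * |g z k - g y k|) ≤
      ENNReal.ofReal (2 * (K * ((4 * r) ^ 2 * Real.pi))) := calc
    _ = ENNReal.ofReal r * volume (uIcc (g y k) (g z k)) := by
        rw [Real.volume_interval, ENNReal.ofReal_mul hr.le]
    _ ≤ ENNReal.ofReal r * volume ((fun w => g w k) '' closedBall y r) := by gcongr
    _ ≤ 2 * ν (f ⁻¹' ball y (4 * r) ∩ Ω₁) :=
        hf.ofReal_mul_volume_image_le_measure_preimage hΩ₁ hν hr hy k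
    _ ≤ 2 * (ENNReal.ofReal K * volume (ball y (4 * r))) := by gcongr
    _ = ENNReal.ofReal (2 * (K * ((4 * r) ^ 2 * Real.pi))) := by
        rw [EuclideanSpace.volume_ball_fin_two, ENNReal.ofReal_mul zero_le_two,
          ENNReal.ofReal_mul hK, ENNReal.ofReal_mul (sq_nonneg _),
          ENNReal.ofReal_pow (by positivity), ENNReal.ofReal_ofNat]
  have hreal := (ENNReal.ofReal_le_ofReal_iff (by positivity)).1 hle
  refine le_of_mul_le_mul_left (hreal.trans_eq ?_) hr
  ring

theorem exists_locallyLipschitzOnWith (hf : IsHomeoOn f g Ω₁ Ω₂) (hΩ₁ : IsOpen Ω₁)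
    (hΩ₂ : IsOpen Ω₂) (hν : MemBVloc Ω₁ f ν) {K : ℝ} (hK : 0 ≤ K)
    (hKν : ∀ A ⊆ Ω₂, MeasurableSet A → ν (f ⁻¹' A ∩ Ω₁) ≤ ENNReal.ofReal K * volume A) :
    ∃ L : ℝ≥0, LocallyLipschitzOnWith L g Ω₂ := by
  refine ⟨(64 * Real.pi * K).toNNReal, fun y₀ hy₀ => ?_⟩
  obtain ⟨ε, hε, hball⟩ := Metric.isOpen_iff.1 hΩ₂ y₀ hy₀
  refine ⟨ε / 16, by positivity, (ball_subset_ball (by linarith)).trans hball,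
    LipschitzOnWith.of_dist_le_mul fun z hz y hy => ?_⟩
  rw [Real.coe_toNNReal _ (by positivity)]
  rcases eq_or_ne z y with rfl | hne
  · simp
  have hzy : dist z y < ε / 8 := by
    rw [mem_ball] at hz hy
    linarith [dist_triangle_right z y y₀]
  have hyΩ : ball y (4 * dist z y) ⊆ Ω₂ := by
    refine (ball_subset_ball' ?_).trans hball
    rw [mem_ball] at hy
    linarith
  calc dist (g z) (g y) ≤ ∑ k, |g z k - g y k| := dist_le_sum_abs_sub _ _
    _ ≤ ∑ _k : Fin 2, 32 * Real.pi * K * dist z y := Finset.sum_le_sum fun k _ =>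
        hf.abs_apply_sub_le hΩ₁ hν (dist_pos.2 hne) hyΩ hK (hKν _ hyΩ measurableSet_ball)
          (mem_closedBall.2 le_rfl) k
    _ = 64 * Real.pi * K * dist z y := by
        rw [Fin.sum_univ_two]
        ring

end IsHomeoOn

end InverseLipschitz

/-- **Lemma (Statement 13).** In the plane, a homeomorphism `f : Ω₁ → Ω₂` has an inverse
in `W^{1,∞}(Ω₂, Ω₁)` (i.e. locally Lipschitz with a uniform constant) if and only if
`f ∈ BV_loc(Ω₁, Ω₂)` and there is `K > 0` with `|Df|(f⁻¹(A)) ≤ K·L²(A)` for all Borel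
`A ⊆ Ω₂`. -/
theorem planar_inverse_lipschitz_iff_variation_bound
    (Ω₁ Ω₂ : Set (En 2)) (hΩ₁ : IsOpen Ω₁) (hΩ₂ : IsOpen Ω₂)
    (f g : En 2 → En 2) (hf : IsHomeoOn f g Ω₁ Ω₂) :
    (∃ L : ℝ≥0, ∀ y ∈ Ω₂, ∃ ε : ℝ, 0 < ε ∧ Metric.ball y ε ⊆ Ω₂ ∧
        LipschitzOnWith L g (Metric.ball y ε))
      ↔ ∃ νf : Measure (En 2), MemBVloc Ω₁ f νf ∧ ∃ K : ℝ, 0 < K ∧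
          ∀ A : Set (En 2), A ⊆ Ω₂ → MeasurableSet A →
            νf (f ⁻¹' A ∩ Ω₁) ≤ ENNReal.ofReal K * volume A := by
  constructor
  · rintro ⟨L, hL⟩
    obtain ⟨ν, hν, K, hK, hKν⟩ :=
      hf.exists_memBVloc_and_measure_preimage_le hΩ₁ hΩ₂.measurableSet hL
    exact ⟨ν, hν, K, hK, fun A _ hA => hKν A hA⟩
  · rintro ⟨ν, hν, K, hK, hKν⟩
    exact hf.exists_locallyLipschitzOnWith hΩ₁ hΩ₂ hν hK.le hKν
end
end

section
/- For every n ≥ 3 there exists a homeomorphism f of [−1,1]ⁿ onto [−1,1]ⁿ with f ∈ W^{1,1}((−1,1)ⁿ, ℝⁿ) and a constant K > 0 such that |Df(x)| ≤ K·|J_f(x)| for Lⁿ-a.e. x (hence |Df|(f⁻¹(A)) ≤ K·Lⁿ(A) for all Borel sets A), but whose inverse f⁻¹ is not a Sobolev mapping (f⁻¹ is continuous but not absolutely continuous on lines, so f⁻¹ ∉ W^{1,1}_loc). -/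
open MeasureTheory Metric Set Filter
open scoped ENNReal Topology NNReal

noncomputable section

/-- `Df` is the (matrix of the) distributional derivative of `f` on `Ω`, given by a
locally integrable function: the weak-derivative integration-by-parts identity. -/
def IsWeakDerivOn {n : ℕ} (Ω : Set (En n)) (f : En n → En n)
    (Df : En n → Fin n → Fin n → ℝ) : Prop :=
  ∀ φ : En n → ℝ, SmoothTest Ω φ → ∀ (j i : Fin n),
    ∫ x in Ω, f x j * fderiv ℝ φ x (EuclideanSpace.single i 1) ∂volume
      = - ∫ x in Ω, φ x * Df x j i ∂volume

/-- The open cube `(-1,1)ⁿ`. -/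
def openSymCube (n : ℕ) : Set (En n) := {x | ∀ i, x i ∈ Set.Ioo (-1 : ℝ) 1}

/-- The closed cube `[-1,1]ⁿ`. -/
def closedSymCube (n : ℕ) : Set (En n) := {x | ∀ i, x i ∈ Set.Icc (-1 : ℝ) 1}

/-!
Take the cube root of one coordinate `y`, which stretches it by the factor `y ^ (-2 / 3) / 3`, and
then move another coordinate `z` by a Möbius transformation of `[-1, 1]` depending on `y` and on a
third coordinate `x` through an oscillating profile `v (x, y)`. The `x`-derivative of the profile
blows up like `y⁻²`. At the stretched point `y ^ (1 / 3)` this is the size of the stretching factor,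
hence of the Jacobian determinant, so the forward map satisfies `|Df| ≤ K |J_f|`; the area formula
then gives integrability of `Df`, and the exceptional hyperplane `y = 0` is harmless because `f` is
continuous.
The inverse applies the Möbius shear before compressing `y`, so that nothing compensates the
non-integrable derivative of the profile.
-/

theorem IsHomeoOn.comp {n : ℕ} {f₁ g₁ f₂ g₂ : En n → En n} {Ω₁ Ω₂ Ω₃ : Set (En n)}
    (h₂ : IsHomeoOn f₂ g₂ Ω₂ Ω₃) (h₁ : IsHomeoOn f₁ g₁ Ω₁ Ω₂) :
    IsHomeoOn (f₂ ∘ f₁) (g₁ ∘ g₂) Ω₁ Ω₃ := by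
  obtain ⟨f₁_cont, g₁_cont, f₁_maps, g₁_maps, left₁, right₁⟩ := h₁
  obtain ⟨f₂_cont, g₂_cont, f₂_maps, g₂_maps, left₂, right₂⟩ := h₂
  refine ⟨f₂_cont.comp f₁_cont f₁_maps, g₁_cont.comp g₂_cont g₂_maps, f₂_maps.comp f₁_maps,
    g₁_maps.comp g₂_maps, fun x hx => ?_, fun y hy => ?_⟩
  · rw [Function.comp, Function.comp, left₂ _ (f₁_maps hx), left₁ x hx]
  · rw [Function.comp, Function.comp, right₁ _ (g₂_maps hy), right₂ y hy]

theorem IsHomeoOn.injOn {n : ℕ} {f g : En n → En n} {Ω₁ Ω₂ : Set (En n)}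
    (h : IsHomeoOn f g Ω₁ Ω₂) : InjOn f Ω₁ :=
  LeftInvOn.injOn h.2.2.2.2.1

/-! ### Coordinate boxes -/

/-- The coordinate box `∏ⱼ I j` in `ℝⁿ`. -/
def box {n : ℕ} (I : Fin n → Set ℝ) : Set (En n) := {p | ∀ j, p j ∈ I j}

section Box

variable {n : ℕ}

theorem box_eq_preimage_pi (I : Fin n → Set ℝ) :
    box I = (WithLp.ofLp : En n → Fin n → ℝ) ⁻¹' univ.pi I := by
  ext p
  simp [box]

theorem box_mono {I J : Fin n → Set ℝ} (h : ∀ j, I j ⊆ J j) : box I ⊆ box J :=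
  fun _ hp j => h j (hp j)

theorem isOpen_box {I : Fin n → Set ℝ} (hI : ∀ j, IsOpen (I j)) : IsOpen (box I) := by
  rw [box_eq_preimage_pi]
  exact (isOpen_set_pi finite_univ fun j _ => hI j).preimage (PiLp.continuous_ofLp 2 _)

theorem isCompact_box {I : Fin n → Set ℝ} (hI : ∀ j, IsCompact (I j)) : IsCompact (box I) := by
  rw [box_eq_preimage_pi]
  exact (PiLp.homeomorph 2 _).isCompact_preimage.2 (isCompact_univ_pi hI)

theorem isOpen_openSymCube : IsOpen (openSymCube n) :=
  isOpen_box fun _ => isOpen_Ioo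

theorem isCompact_closedSymCube : IsCompact (closedSymCube n) :=
  isCompact_box fun _ => isCompact_Icc

theorem openSymCube_subset_closedSymCube : openSymCube n ⊆ closedSymCube n :=
  box_mono fun _ => Ioo_subset_Icc_self

theorem mem_closedSymCube_iff {p : En n} : p ∈ closedSymCube n ↔ ∀ j, |p j| ≤ 1 := by
  simp only [closedSymCube, mem_ofPred_eq, mem_Icc, abs_le]

theorem ae_apply_notMem (b : Fin n) {S : Set ℝ} (hS : S.Countable) : ∀ᵐ p : En n, p b ∉ S :=
  ((Measure.quasiMeasurePreserving_eval (fun _ : Fin n => (volume : Measure ℝ)) b).comp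
    (PiLp.volume_preserving_ofLp (Fin n)).quasiMeasurePreserving).ae (hS.ae_notMem volume)

theorem setIntegral_box_apply (a : Fin n) (I : Fin n → Set ℝ) (u : ℝ → ℝ) :
    ∫ p in box I, u (p a) =
      (∫ x in I a, u x) * ∏ j ∈ Finset.univ.erase a, volume.real (I j) := by
  let φ : Fin n → ℝ → ℝ := fun j => if j = a then u else 1
  have prod_φ (q : Fin n → ℝ) : u (q a) = ∏ j, φ j (q j) := by
    rw [Finset.prod_eq_single a (fun j _ hj => by simp [φ, hj]) (by simp)]
    simp [φ]
  calc ∫ p in box I, u (p a)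
      = ∫ q in univ.pi I, u (q a) := by
        rw [box_eq_preimage_pi]
        exact (PiLp.volume_preserving_ofLp (Fin n)).setIntegral_preimage_emb
          (MeasurableEquiv.toLp 2 (Fin n → ℝ)).symm.measurableEmbedding (fun q => u (q a)) _
    _ = ∏ j, ∫ x in I j, φ j x := by
        simp only [prod_φ]
        rw [volume_pi, Measure.restrict_pi_pi, integral_fintype_prod_eq_prod]
    _ = (∫ x in I a, u x) * ∏ j ∈ Finset.univ.erase a, volume.real (I j) := by
        rw [← Finset.mul_prod_erase _ _ (Finset.mem_univ a)]
        congr 1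
        · simp [φ]
        · refine Finset.prod_congr rfl fun j hj => ?_
          simp [φ, Finset.ne_of_mem_erase hj]

end Box

/-! ### Integration by parts off countably many hyperplanes -/

section LineDeriv

variable {E : Type*} [NormedAddCommGroup E] [NormedSpace ℝ E]

theorem integral_eq_integral_integral_insertNth {m : ℕ} (i : Fin (m + 1)) {F : En (m + 1) → E}
    (hF : Integrable F) :
    ∫ p, F p = ∫ q : Fin m → ℝ, ∫ t : ℝ, F (WithLp.toLp 2 (i.insertNth t q)) := by
  have insert_pres : MeasurePreserving
      fun q : ℝ × (Fin m → ℝ) => (WithLp.toLp 2 (i.insertNth q.1 q.2) : En (m + 1)) :=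
    (PiLp.volume_preserving_toLp (Fin (m + 1))).comp
      (volume_preserving_piFinSuccAbove (fun _ => ℝ) i).symm
  rw [← insert_pres.map_eq, integral_map insert_pres.aemeasurable
    (insert_pres.map_eq ▸ hF.aestronglyMeasurable), Measure.volume_eq_prod,
    integral_prod_symm _ (by exact insert_pres.integrable_comp_of_integrable hF)]

theorem ae_countable_insertNth_apply_mem {m : ℕ} (i b : Fin (m + 1)) {S : Set ℝ}
    (hS : S.Countable) :
    ∀ᵐ q : Fin m → ℝ, {t : ℝ | (i.insertNth t q : Fin (m + 1) → ℝ) b ∈ S}.Countable := by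
  rcases Fin.eq_self_or_eq_succAbove i b with rfl | ⟨k, rfl⟩
  · exact .of_forall fun q => by simpa using hS
  · filter_upwards [(Measure.quasiMeasurePreserving_eval (fun _ => volume) k).ae
      (hS.ae_notMem volume)] with q hq
    simp [hq]

theorem hasDerivAt_insertNth_of_hasLineDerivAt {m : ℕ} {i : Fin (m + 1)}
    {G : En (m + 1) → E} {G' : E} {t : ℝ} {q : Fin m → ℝ}
    (h : HasLineDerivAt ℝ G G' (WithLp.toLp 2 (i.insertNth t q)) (EuclideanSpace.single i 1)) :
    HasDerivAt (fun s : ℝ => G (WithLp.toLp 2 (i.insertNth s q))) G' t := by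
  have line_eq (s : ℝ) :
      (WithLp.toLp 2 (i.insertNth t q) + s • EuclideanSpace.single i 1 : En (m + 1)) =
        WithLp.toLp 2 (i.insertNth (t + s) q) := by
    ext j
    refine Fin.succAboveCases i ?_ (fun j => ?_) j <;> simp [Fin.succAbove_ne]
  simp only [HasLineDerivAt, line_eq] at h
  rw [← neg_add_cancel t] at h
  simpa only [add_neg_cancel_left] using h.comp_const_add (-t) t

variable [CompleteSpace E]

theorem integral_eq_zero_of_hasDerivAt_off_countable {u u' : ℝ → E} (hu : Continuous u)
    (hc : HasCompactSupport u) {S : Set ℝ} (hS : S.Countable)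
    (hd : ∀ t ∉ S, HasDerivAt u (u' t) t) (hi : Integrable u') : ∫ t, u' t = 0 := by
  obtain ⟨R, hR⟩ := hc.isCompact.isBounded.exists_norm_le
  have u_eq_zero {t : ℝ} (ht : R < |t|) : u t = 0 :=
    image_eq_zero_of_notMem_tsupport fun h => (hR t h).not_gt ht
  refine tendsto_nhds_unique
    (intervalIntegral_tendsto_integral hi tendsto_neg_atTop_atBot tendsto_id)
    (tendsto_const_nhds.congr' ?_)
  filter_upwards [eventually_gt_atTop R] with r hr
  have hr' : R < |r| := hr.trans_le (le_abs_self r)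
  rw [integral_eq_of_hasDerivAt_off_countable u u' hS hu.continuousOn (fun t ht => hd t ht.2)
    hi.intervalIntegrable, id, u_eq_zero hr', u_eq_zero (by rwa [abs_neg]), sub_zero]

theorem integral_eq_zero_of_hasLineDerivAt_off_countable {n : ℕ} (i b : Fin n) {G G' : En n → E}
    (hG : Continuous G) (hc : HasCompactSupport G) {S : Set ℝ} (hS : S.Countable)
    (hd : ∀ p : En n, p b ∉ S → HasLineDerivAt ℝ G (G' p) p (EuclideanSpace.single i 1))
    (hi : Integrable G') : ∫ p, G' p = 0 := by
  obtain ⟨m, rfl⟩ : ∃ m, n = m + 1 := ⟨n - 1, by have := i.2; omega⟩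
  rw [integral_eq_integral_integral_insertNth i hi]
  refine integral_eq_zero_of_ae ?_
  filter_upwards [ae_countable_insertNth_apply_mem i b hS] with q hq
  by_cases hint : Integrable fun t : ℝ => G' (WithLp.toLp 2 (i.insertNth t q))
  · have emb : Topology.IsClosedEmbedding
        fun t : ℝ => (WithLp.toLp 2 (i.insertNth t q) : En (m + 1)) :=
      Function.LeftInverse.isClosedEmbedding (f := fun p : En (m + 1) => p i)
        (fun t => by simp) (by fun_prop) ((PiLp.continuous_toLp 2 _).comp (by fun_prop))
    exact integral_eq_zero_of_hasDerivAt_off_countable (hG.comp emb.continuous)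
      (hc.comp_isClosedEmbedding emb) hq
      (fun t ht => hasDerivAt_insertNth_of_hasLineDerivAt (hd _ ht)) hint
  · exact integral_undef hint

end LineDeriv

theorem hasLineDerivAt_mul_of_mem_tsupport {V : Type*} [NormedAddCommGroup V] [NormedSpace ℝ V]
    {φ F : V → ℝ} {F' : ℝ} {p e : V} (hφ : DifferentiableAt ℝ φ p)
    (hF : p ∈ tsupport φ → HasLineDerivAt ℝ F F' p e) :
    HasLineDerivAt ℝ (fun x => φ x * F x) (fderiv ℝ φ p e * F p + φ p * F') p e := by
  by_cases hp : p ∈ tsupport φ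
  · have h := HasDerivAt.fun_mul (hφ.hasFDerivAt.hasLineDerivAt e) (hF hp)
    simpa only [HasLineDerivAt, zero_smul, add_zero] using h
  · have h0 : (fun x => φ x * F x) =ᶠ[𝓝 p] fun _ => 0 := by
      filter_upwards [notMem_tsupport_iff_eventuallyEq.1 hp] with y hy
      simp [hy]
    rw [image_eq_zero_of_notMem_tsupport hp, fderiv_of_notMem_tsupport ℝ hp]
    simpa using ((hasFDerivAt_const (0 : ℝ) p).congr_of_eventuallyEq h0).hasLineDerivAt e

theorem integrable_mul_of_tsupport_subset {n : ℕ} {Ω : Set (En n)} {φ F : En n → ℝ}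
    (hφ : Continuous φ) (hc : HasCompactSupport φ) (hφΩ : tsupport φ ⊆ Ω)
    (hF : LocallyIntegrableOn F Ω) : Integrable fun x => φ x * F x := by
  obtain ⟨C, hC⟩ := hc.exists_bound_of_continuous hφ
  refine (integrableOn_iff_integrable_of_support_subset (s := tsupport φ) ?_).1
    ((hF.integrableOn_compact_subset hφΩ hc).bdd_mul hφ.aestronglyMeasurable (.of_forall hC))
  exact (Function.support_mul_subset_left φ F).trans (subset_tsupport φ)

theorem integral_mul_fderiv_eq_neg_of_hasLineDerivAt_off_countable {n : ℕ} {Ω : Set (En n)}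
    (hΩ : IsOpen Ω) {F F' : En n → ℝ} (hF : ContinuousOn F Ω) (hF' : LocallyIntegrableOn F' Ω)
    (i b : Fin n) {S : Set ℝ} (hS : S.Countable)
    (hd : ∀ p ∈ Ω, p b ∉ S → HasLineDerivAt ℝ F (F' p) p (EuclideanSpace.single i 1))
    {φ : En n → ℝ} (hφ : SmoothTest Ω φ) :
    ∫ x in Ω, F x * fderiv ℝ φ x (EuclideanSpace.single i 1) = -∫ x in Ω, φ x * F' x := by
  obtain ⟨φ_smooth, φ_cpt, φ_supp⟩ := hφ
  set e : En n := EuclideanSpace.single i 1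
  have φ_cont : Continuous φ := φ_smooth.continuous
  have dφ_cont : Continuous fun x => fderiv ℝ φ x e :=
    (φ_smooth.continuous_fderiv (by simp)).clm_apply continuous_const
  have dφ_supp : tsupport (fun x => fderiv ℝ φ x e) ⊆ tsupport φ := tsupport_fderiv_apply_subset ℝ e
  have mul_F_cont {ψ : En n → ℝ} (hψ : Continuous ψ) (hsupp : tsupport ψ ⊆ tsupport φ) :
      Continuous fun x => ψ x * F x :=
    continuous_of_tsupport fun x hx => hψ.continuousAt.mul <|
      hF.continuousAt <| hΩ.mem_nhds <| φ_supp <| hsupp <| tsupport_mul_subset_left hx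
  have dφF_int : Integrable fun x => fderiv ℝ φ x e * F x :=
    (mul_F_cont dφ_cont dφ_supp).integrable_of_hasCompactSupport
      (φ_cpt.fderiv_apply ℝ e).mul_right
  have φ_off {x : En n} (hx : x ∉ Ω) : φ x = 0 :=
    image_eq_zero_of_notMem_tsupport fun h => hx (φ_supp h)
  have dφ_off {x : En n} (hx : x ∉ Ω) : fderiv ℝ φ x e = 0 :=
    image_eq_zero_of_notMem_tsupport (f := fun x => fderiv ℝ φ x e) fun h => hx (φ_supp (dφ_supp h))
  have φF'_int : Integrable fun x => φ x * F' x :=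
    integrable_mul_of_tsupport_subset φ_cont φ_cpt φ_supp hF'
  have key := integral_eq_zero_of_hasLineDerivAt_off_countable i b
    (mul_F_cont φ_cont subset_rfl) φ_cpt.mul_right hS
    (fun p hp => hasLineDerivAt_mul_of_mem_tsupport (φ_smooth.differentiable (by simp) p)
      fun hpt => hd p (φ_supp hpt) hp) (dφF_int.add φF'_int)
  rw [integral_add dφF_int φF'_int] at key
  rw [setIntegral_eq_integral_of_forall_compl_eq_zero fun x hx => by rw [dφ_off hx, mul_zero],
    setIntegral_eq_integral_of_forall_compl_eq_zero fun x hx => by rw [φ_off hx, zero_mul]]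
  simp only [mul_comm (F _)]
  linarith

/-! ### The Jacobian matrix as a weak derivative -/

section Jacobian

variable {m n : ℕ}

/-- The matrix of the pointwise derivative of `f`, indexed as in `IsWeakDerivOn`: the entry `j i` is
`∂fⱼ/∂xᵢ`. Where `f` is not differentiable it is `0`, the junk value of `fderiv`. -/
def jacobian (f : En n → En m) (p : En n) : Fin m → Fin n → ℝ :=
  fun j i => fderiv ℝ f p (EuclideanSpace.single i 1) j

theorem abs_apply_le_frobNorm (M : Fin m → Fin n → ℝ) (j : Fin m) (i : Fin n) :
    |M j i| ≤ frobNorm M := by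
  refine Real.abs_le_sqrt ?_
  exact (Finset.single_le_sum (fun i' _ => sq_nonneg (M j i')) (Finset.mem_univ i)).trans
    (Finset.single_le_sum (f := fun j => ∑ i, M j i ^ 2)
      (fun j _ => Finset.sum_nonneg fun _ _ => sq_nonneg _) (Finset.mem_univ j))

theorem frobNorm_jacobian_le (f : En n → En n) (p : En n) :
    frobNorm (jacobian f p) ≤ n * ‖fderiv ℝ f p‖ := by
  have entry_sq_le (j i : Fin n) : jacobian f p j i ^ 2 ≤ ‖fderiv ℝ f p‖ ^ 2 := by
    rw [sq_le_sq, abs_norm]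
    calc |jacobian f p j i| ≤ ‖fderiv ℝ f p (EuclideanSpace.single i 1)‖ :=
          PiLp.norm_apply_le (fderiv ℝ f p (EuclideanSpace.single i 1)) j
      _ ≤ ‖fderiv ℝ f p‖ := (fderiv ℝ f p).unit_le_opNorm _ (by simp)
  refine Real.sqrt_le_iff.2 ⟨by positivity, ?_⟩
  calc ∑ j, ∑ i, jacobian f p j i ^ 2 ≤ ∑ _j : Fin n, ∑ _i : Fin n, ‖fderiv ℝ f p‖ ^ 2 := by
        exact Finset.sum_le_sum fun j _ => Finset.sum_le_sum fun i _ => entry_sq_le j i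
    _ = (n * ‖fderiv ℝ f p‖) ^ 2 := by
        simp only [Finset.sum_const, Finset.card_univ, Fintype.card_fin, nsmul_eq_mul]
        ring

theorem det_jacobian (f : En n → En n) (p : En n) :
    Matrix.det (Matrix.of fun j i => jacobian f p j i) = (fderiv ℝ f p).det := by
  rw [ContinuousLinearMap.det, ← LinearMap.det_toMatrix (EuclideanSpace.basisFun (Fin n) ℝ).toBasis]
  rfl

theorem measurable_jacobian (f : En n → En m) : Measurable (jacobian f) :=
  measurable_pi_lambda _ fun j => measurable_pi_lambda _ fun _ =>
    (EuclideanSpace.proj (𝕜 := ℝ) j).measurable.comp (measurable_fderiv_apply_const ℝ f _)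

theorem hasLineDerivAt_jacobian {f : En n → En m} {p : En n} (hf : DifferentiableAt ℝ f p)
    (j : Fin m) (i : Fin n) :
    HasLineDerivAt ℝ (fun q => f q j) (jacobian f p j i) p (EuclideanSpace.single i 1) :=
  ((EuclideanSpace.proj (𝕜 := ℝ) j).hasFDerivAt.comp p hf.hasFDerivAt).hasLineDerivAt _

theorem isWeakDerivOn_jacobian {Ω : Set (En n)} (hΩ : IsOpen Ω) {f : En n → En n}
    (hf : ContinuousOn f Ω) (b : Fin n) {S : Set ℝ} (hS : S.Countable)
    (hd : ∀ p ∈ Ω, p b ∉ S → DifferentiableAt ℝ f p) (hi : IntegrableOn (jacobian f) Ω) :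
    IsWeakDerivOn Ω f (jacobian f) := fun _ hφ j i =>
  integral_mul_fderiv_eq_neg_of_hasLineDerivAt_off_countable hΩ
    ((EuclideanSpace.proj (𝕜 := ℝ) j).continuous.comp_continuousOn hf)
    (IntegrableOn.locallyIntegrableOn ((hi.eval j).eval i)) i b hS
    (fun p hp hpb => hasLineDerivAt_jacobian (hd p hp hpb) j i) hφ

theorem lintegral_frobNorm_jacobian_le {Ω : Set (En n)} (hΩ : MeasurableSet Ω) {f : En n → En n}
    (hf : ContinuousOn f Ω) (hinj : InjOn f Ω) {K : ℝ}
    (hK : ∀ᵐ p ∂volume.restrict Ω,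
      DifferentiableAt ℝ f p ∧ frobNorm (jacobian f p) ≤ K * |(fderiv ℝ f p).det|)
    {A : Set (En n)} (hA : MeasurableSet A) :
    ∫⁻ p in f ⁻¹' A ∩ Ω, ENNReal.ofReal (frobNorm (jacobian f p)) ≤
      ENNReal.ofReal K * volume A := by
  have hAΩ : MeasurableSet (f ⁻¹' A ∩ Ω) := by
    rw [inter_comm, ← Subtype.image_preimage_coe]
    exact (MeasurableEmbedding.subtype_coe hΩ).measurableSet_image.2
      ((continuousOn_iff_continuous_domRestrict.1 hf).measurable hA)
  set s := f ⁻¹' A ∩ Ω ∩ {p | DifferentiableAt ℝ f p}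
  have hsm : MeasurableSet s := hAΩ.inter (measurableSet_of_differentiableAt ℝ f)
  have hsΩ : s ⊆ Ω := fun p hp => hp.1.2
  have hae : (f ⁻¹' A ∩ Ω : Set (En n)) =ᵐ[volume] s := by
    filter_upwards [(ae_restrict_iff' hΩ).1 hK] with p hp
    exact propext ⟨fun h => ⟨h, (hp h.2).1⟩, fun h => h.1⟩
  calc ∫⁻ p in f ⁻¹' A ∩ Ω, ENNReal.ofReal (frobNorm (jacobian f p))
      = ∫⁻ p in s, ENNReal.ofReal (frobNorm (jacobian f p)) := by
        rw [Measure.restrict_congr_set hae]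
    _ ≤ ∫⁻ p in s, ENNReal.ofReal K * ENNReal.ofReal |(fderiv ℝ f p).det| := by
        refine lintegral_mono_ae ?_
        filter_upwards [ae_restrict_of_ae_restrict_of_subset hsΩ hK] with p hp
        rw [← ENNReal.ofReal_mul' (abs_nonneg _)]
        exact ENNReal.ofReal_le_ofReal hp.2
    _ = ENNReal.ofReal K * volume (f '' s) := by
        rw [lintegral_const_mul' _ _ ENNReal.ofReal_ne_top,
          lintegral_abs_det_fderiv_eq_addHaar_image volume hsm
            (fun p hp => hp.2.hasFDerivAt.hasFDerivWithinAt) (hinj.mono hsΩ)]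
    _ ≤ ENNReal.ofReal K * volume A := by
        gcongr
        exact image_subset_iff.2 fun p hp => hp.1.1

theorem integrableOn_jacobian {Ω A : Set (En n)} (hΩ : MeasurableSet Ω) {f : En n → En n}
    (hf : ContinuousOn f Ω) (hinj : InjOn f Ω) {K : ℝ}
    (hK : ∀ᵐ p ∂volume.restrict Ω,
      DifferentiableAt ℝ f p ∧ frobNorm (jacobian f p) ≤ K * |(fderiv ℝ f p).det|)
    (hA : MeasurableSet A) (hfA : MapsTo f Ω A) (hA_fin : volume A ≠ ∞) :
    IntegrableOn (jacobian f) Ω := by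
  have area := lintegral_frobNorm_jacobian_le hΩ hf hinj hK hA
  rw [inter_eq_right.2 (show Ω ⊆ f ⁻¹' A from hfA)] at area
  refine Integrable.of_eval fun j => Integrable.of_eval fun i => ⟨?_, ?_⟩
  · exact ((measurable_jacobian f).eval.eval).aestronglyMeasurable
  · calc ∫⁻ p in Ω, ‖jacobian f p j i‖ₑ
        ≤ ∫⁻ p in Ω, ENNReal.ofReal (frobNorm (jacobian f p)) := by
          gcongr with p
          rw [← ofReal_norm]
          exact ENNReal.ofReal_le_ofReal (abs_apply_le_frobNorm _ j i)
      _ ≤ ENNReal.ofReal K * volume A := area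
      _ < ∞ := ENNReal.mul_lt_top ENNReal.ofReal_lt_top hA_fin.lt_top

theorem exists_isWeakDerivOn_of_frobNorm_jacobian_le {f g : En n → En n}
    (hf : IsHomeoOn f g (closedSymCube n) (closedSymCube n)) (b : Fin n) {S : Set ℝ}
    (hS : S.Countable) {K : ℝ}
    (hK : ∀ p ∈ closedSymCube n, p b ∉ S → DifferentiableAt ℝ f p ∧
      frobNorm (jacobian f p) ≤ K * |(fderiv ℝ f p).det|) :
    ∃ Df : En n → Fin n → Fin n → ℝ,
      IntegrableOn f (openSymCube n) ∧ IntegrableOn Df (openSymCube n) ∧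
      IsWeakDerivOn (openSymCube n) f Df ∧
      (∀ᵐ p ∂volume.restrict (openSymCube n),
        frobNorm (Df p) ≤ K * |Matrix.det (Matrix.of fun j i => Df p j i)|) ∧
      ∀ A : Set (En n), MeasurableSet A →
        ∫⁻ p in f ⁻¹' A ∩ openSymCube n, ENNReal.ofReal (frobNorm (Df p))
          ≤ ENNReal.ofReal K * volume A := by
  have sub : openSymCube n ⊆ closedSymCube n := openSymCube_subset_closedSymCube
  have cont : ContinuousOn f (openSymCube n) := hf.1.mono sub
  have inj : InjOn f (openSymCube n) := hf.injOn.mono sub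
  have meas : MeasurableSet (openSymCube n) := isOpen_openSymCube.measurableSet
  have ae_bound : ∀ᵐ p ∂volume.restrict (openSymCube n), DifferentiableAt ℝ f p ∧
      frobNorm (jacobian f p) ≤ K * |(fderiv ℝ f p).det| := by
    filter_upwards [ae_restrict_mem meas, ae_restrict_of_ae (ae_apply_notMem b hS)] with p hp hpb
    exact hK p (sub hp) hpb
  have integrable : IntegrableOn (jacobian f) (openSymCube n) :=
    integrableOn_jacobian meas cont inj ae_bound isCompact_closedSymCube.measurableSet
      (hf.2.2.1.mono_left sub) isCompact_closedSymCube.measure_ne_top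
  have weak : IsWeakDerivOn (openSymCube n) f (jacobian f) :=
    isWeakDerivOn_jacobian isOpen_openSymCube cont b hS
      (fun p hp hpb => (hK p (sub hp) hpb).1) integrable
  refine ⟨jacobian f, (hf.1.integrableOn_compact isCompact_closedSymCube).mono_set sub,
    integrable, weak, ?_, fun A hA => lintegral_frobNorm_jacobian_le meas cont inj ae_bound hA⟩
  simpa only [det_jacobian] using ae_bound.mono fun _ h => h.2

theorem IsWeakDerivOn.mono {Ω U : Set (En n)} {g : En n → En n} {Dg : En n → Fin n → Fin n → ℝ}
    (h : IsWeakDerivOn Ω g Dg) (hU : U ⊆ Ω) : IsWeakDerivOn U g Dg := by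
  rintro φ ⟨φ_smooth, φ_cpt, φ_supp⟩ j i
  have integral_eq {u : En n → ℝ} (hu : ∀ p ∉ U, u p = 0) : ∫ p in U, u p = ∫ p in Ω, u p :=
    (setIntegral_eq_integral_of_forall_compl_eq_zero hu).trans
      (setIntegral_eq_integral_of_forall_compl_eq_zero fun p hp => hu p fun h => hp (hU h)).symm
  rw [integral_eq fun p hp => ?_, integral_eq fun p hp => ?_]
  · exact h φ ⟨φ_smooth, φ_cpt, φ_supp.trans hU⟩ j i
  · rw [image_eq_zero_of_notMem_tsupport fun h => hp (φ_supp h), zero_mul]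
  · rw [fderiv_of_notMem_tsupport ℝ fun h => hp (φ_supp h), zero_apply, mul_zero]

theorem IsWeakDerivOn.ae_eq_fderiv {U : Set (En n)} {g : En n → En n}
    {Dg : En n → Fin n → Fin n → ℝ} (h : IsWeakDerivOn U g Dg) (hU : IsOpen U) {j i : Fin n}
    (hDg : LocallyIntegrableOn (fun p => Dg p j i) U) (hg : ContDiffOn ℝ 1 (fun p => g p j) U) :
    ∀ᵐ p : En n, p ∈ U →
      Dg p j i = fderiv ℝ (fun q => g q j) p (EuclideanSpace.single i 1) := by
  set e : En n := EuclideanSpace.single i 1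
  set G : En n → ℝ := fun p => fderiv ℝ (fun q => g q j) p e
  have hG : LocallyIntegrableOn G U :=
    ((hg.continuousOn_fderiv_of_isOpen hU le_rfl).clm_apply continuousOn_const).locallyIntegrableOn
      hU.measurableSet
  have hgG (p : En n) (hp : p ∈ U) : HasLineDerivAt ℝ (fun q => g q j) (G p) p e :=
    ((hg.differentiableOn one_ne_zero p hp).differentiableAt
      (hU.mem_nhds hp)).hasFDerivAt.hasLineDerivAt e
  have main := hU.ae_eq_zero_of_integral_contDiff_smul_eq_zero (hDg.sub hG) (μ := volume)
    fun φ φ_smooth φ_cpt φ_supp => ?_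
  · filter_upwards [main] with p hp hpU
    exact sub_eq_zero.1 (hp hpU)
  have weak := h φ ⟨φ_smooth, φ_cpt, φ_supp⟩ j i
  have classical := integral_mul_fderiv_eq_neg_of_hasLineDerivAt_off_countable hU
    hg.continuousOn hG i i countable_empty (fun p hp _ => hgG p hp) ⟨φ_smooth, φ_cpt, φ_supp⟩
  calc ∫ p, φ p • (Dg p j i - G p) = ∫ p in U, φ p • (Dg p j i - G p) := by
        refine (setIntegral_eq_integral_of_forall_compl_eq_zero fun p hp => ?_).symm
        rw [image_eq_zero_of_notMem_tsupport fun h => hp (φ_supp h), zero_smul]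
    _ = (∫ p in U, φ p * Dg p j i) - ∫ p in U, φ p * G p := by
        rw [← integral_sub
          (integrable_mul_of_tsupport_subset φ_smooth.continuous φ_cpt φ_supp hDg).integrableOn
          (integrable_mul_of_tsupport_subset φ_smooth.continuous φ_cpt φ_supp hG).integrableOn]
        simp only [smul_eq_mul, mul_sub]
    _ = 0 := by linarith

end Jacobian

/-! ### Maps changing a single coordinate -/

section UpdateCoord

variable {n : ℕ} (c : Fin n)

/-- The self-map of `ℝⁿ` which replaces the `c`-th coordinate of `p` by `u p`. It is written as a
perturbation of the identity so that it can be differentiated directly. -/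
def updateCoord (u : En n → ℝ) (p : En n) : En n :=
  p + (u p - p c) • EuclideanSpace.single c 1

/-- `updateCoord c ℓ` for a linear form `ℓ`, as a continuous linear map: the derivative of
`updateCoord c u` at a point where `u` has derivative `ℓ`. -/
def updateCoordL (ℓ : En n →L[ℝ] ℝ) : En n →L[ℝ] En n :=
  .id ℝ (En n) + (ℓ - EuclideanSpace.proj c).smulRight (EuclideanSpace.single c 1)

variable {c}

theorem updateCoord_apply_self (u : En n → ℝ) (p : En n) : updateCoord c u p c = u p := by
  simp [updateCoord]

theorem updateCoord_apply_of_ne (u : En n → ℝ) (p : En n) {j : Fin n} (hj : j ≠ c) :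
    updateCoord c u p j = p j := by
  simp [updateCoord, hj]

theorem updateCoord_updateCoord {u u' : En n → ℝ} {p : En n}
    (h : u' (updateCoord c u p) = p c) : updateCoord c u' (updateCoord c u p) = p := by
  ext j
  rcases eq_or_ne j c with rfl | hj
  · rw [updateCoord_apply_self, h]
  · rw [updateCoord_apply_of_ne _ _ hj, updateCoord_apply_of_ne _ _ hj]

theorem norm_updateCoord_le (u : En n → ℝ) (p : En n) :
    ‖updateCoord c u p‖ ≤ ‖p‖ + |u p| := by
  have norm_erase_le : ‖p - p c • EuclideanSpace.single c (1 : ℝ)‖ ≤ ‖p‖ := by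
    rw [EuclideanSpace.norm_eq, EuclideanSpace.norm_eq]
    gcongr with j
    rcases eq_or_ne j c with rfl | hj
    · simp
    · simp [hj]
  calc ‖updateCoord c u p‖
      = ‖(p - p c • EuclideanSpace.single c (1 : ℝ)) + u p • EuclideanSpace.single c (1 : ℝ)‖ := by
        rw [updateCoord, sub_smul]
        congr 1
        abel
    _ ≤ ‖p‖ + |u p| := by
        refine (norm_add_le _ _).trans (add_le_add norm_erase_le ?_)
        simp [norm_smul]

theorem continuousOn_updateCoord {u : En n → ℝ} {s : Set (En n)} (hu : ContinuousOn u s) :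
    ContinuousOn (updateCoord c u) s := by
  unfold updateCoord
  fun_prop

theorem hasFDerivAt_updateCoord {u : En n → ℝ} {ℓ : En n →L[ℝ] ℝ} {p : En n}
    (hu : HasFDerivAt u ℓ p) : HasFDerivAt (updateCoord c u) (updateCoordL c ℓ) p :=
  (hasFDerivAt_id p).add
    ((hu.sub (EuclideanSpace.proj (𝕜 := ℝ) c).hasFDerivAt).smul_const (EuclideanSpace.single c 1))

theorem det_updateCoordL (ℓ : En n →L[ℝ] ℝ) :
    (updateCoordL c ℓ).det = ℓ (EuclideanSpace.single c 1) := by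
  have h := LinearMap.transvection.det
    (ℓ - EuclideanSpace.proj c : En n →L[ℝ] ℝ).toLinearMap (EuclideanSpace.single c 1)
  calc (updateCoordL c ℓ).det = _ := h
    _ = ℓ (EuclideanSpace.single c 1) := by simp

theorem isHomeoOn_updateCoord {u u' : En n → ℝ} (hu : ContinuousOn u (closedSymCube n))
    (hu' : ContinuousOn u' (closedSymCube n)) (hu_le : ∀ p ∈ closedSymCube n, |u p| ≤ 1)
    (hu'_le : ∀ p ∈ closedSymCube n, |u' p| ≤ 1)
    (left : ∀ p ∈ closedSymCube n, u' (updateCoord c u p) = p c)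
    (right : ∀ p ∈ closedSymCube n, u (updateCoord c u' p) = p c) :
    IsHomeoOn (updateCoord c u) (updateCoord c u') (closedSymCube n) (closedSymCube n) := by
  have maps {w : En n → ℝ} (hw : ∀ p ∈ closedSymCube n, |w p| ≤ 1) :
      MapsTo (updateCoord c w) (closedSymCube n) (closedSymCube n) := by
    intro p hp
    refine mem_closedSymCube_iff.2 fun j => ?_
    rcases eq_or_ne j c with rfl | hj
    · rw [updateCoord_apply_self]
      exact hw p hp
    · rw [updateCoord_apply_of_ne _ _ hj]
      exact mem_closedSymCube_iff.1 hp j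
  exact ⟨continuousOn_updateCoord hu, continuousOn_updateCoord hu', maps hu_le, maps hu'_le,
    fun p hp => updateCoord_updateCoord (left p hp),
    fun p hp => updateCoord_updateCoord (right p hp)⟩

end UpdateCoord

/-! ### The cube root -/

theorem cube_strictMono : StrictMono fun s : ℝ => s ^ 3 :=
  Odd.strictMono_pow (by decide)

theorem cube_surjective : Function.Surjective fun s : ℝ => s ^ 3 := by
  refine Continuous.surjective (by fun_prop) (tendsto_pow_atTop three_ne_zero) ?_
  refine (tendsto_neg_atTop_atBot.comp
    ((tendsto_pow_atTop three_ne_zero).comp tendsto_neg_atBot_atTop)).congr fun s => ?_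
  simp only [Function.comp_apply]
  ring

/-- The real cube root, also on negative numbers (where `Real.rpow` would not give it). -/
def cbrt : ℝ ≃ₜ ℝ :=
  (cube_strictMono.orderIsoOfSurjective _ cube_surjective).toHomeomorph.symm

theorem cbrt_pow (y : ℝ) : cbrt y ^ 3 = y :=
  (cube_strictMono.orderIsoOfSurjective _ cube_surjective).apply_symm_apply y

theorem cbrt_cube (s : ℝ) : cbrt (s ^ 3) = s :=
  cube_strictMono.injective (cbrt_pow _)

theorem cbrt_ne_zero {y : ℝ} (hy : y ≠ 0) : cbrt y ≠ 0 := fun h =>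
  hy (by rw [← cbrt_pow y, h, zero_pow three_ne_zero])

theorem abs_cbrt_le_one {y : ℝ} (hy : |y| ≤ 1) : |cbrt y| ≤ 1 := by
  rwa [← pow_le_one_iff_of_nonneg (abs_nonneg _) three_ne_zero, ← abs_pow, cbrt_pow]

theorem hasDerivAt_cbrt {y : ℝ} (hy : y ≠ 0) : HasDerivAt cbrt (3 * cbrt y ^ 2)⁻¹ y := by
  have cbrt_ne := cbrt_ne_zero hy
  have cube_deriv : HasDerivAt (fun s : ℝ => s ^ 3) (3 * cbrt y ^ 2) (cbrt y) := by
    simpa using hasDerivAt_pow 3 (cbrt y)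
  exact cube_deriv.of_local_left_inverse cbrt.continuous.continuousAt (by positivity)
    (.of_forall cbrt_pow)

theorem one_third_le_inv_three_mul_sq {s : ℝ} (hs : s ≠ 0) (hs1 : |s| ≤ 1) :
    1 / 3 ≤ (3 * s ^ 2)⁻¹ := by
  have sq_le : s ^ 2 ≤ 1 := (sq_le_one_iff_abs_le_one s).2 hs1
  rw [one_div]
  exact inv_anti₀ (by positivity) (by linarith)

/-! ### The Möbius family fixing `±1` -/

/-- The addition law of `tanh`, `mobius (tanh x) (tanh y) = tanh (x + y)`. For fixed `t` with
`|t| < 1`, `z ↦ mobius z t` is a Möbius transformation of `[-1, 1]` fixing `±1`, with inverse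
`z ↦ mobius z (-t)`. -/
def mobius (z t : ℝ) : ℝ := (z + t) / (1 + t * z)

/-- The partial derivative `∂/∂z` of `mobius z t`. As `mobius` is symmetric, the other partial
derivative is `mobiusDeriv t z`. -/
def mobiusDeriv (z t : ℝ) : ℝ := (1 - t ^ 2) / (1 + t * z) ^ 2

section Mobius

variable {z t : ℝ}

theorem abs_mul_le_half (hz : |z| ≤ 1) (ht : |t| ≤ 1 / 2) : |t * z| ≤ 1 / 2 := by
  rw [abs_mul]
  nlinarith [abs_nonneg t, abs_nonneg z]

theorem one_add_mul_pos (hz : |z| ≤ 1) (ht : |t| ≤ 1 / 2) : 0 < 1 + t * z := by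
  linarith [(abs_le.1 (abs_mul_le_half hz ht)).1]

theorem abs_mobius_le_one (hz : |z| ≤ 1) (ht : |t| ≤ 1 / 2) : |mobius z t| ≤ 1 := by
  have den_pos := one_add_mul_pos hz ht
  obtain ⟨hz₁, hz₂⟩ := abs_le.1 hz
  obtain ⟨ht₁, ht₂⟩ := abs_le.1 ht
  rw [mobius, abs_le, le_div_iff₀ den_pos, div_le_iff₀ den_pos]
  constructor <;> nlinarith

theorem mobius_mobius_neg (hz : |z| ≤ 1) (ht : |t| ≤ 1 / 2) : mobius (mobius z t) (-t) = z := by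
  have den_ne : 1 + t * z ≠ 0 := (one_add_mul_pos hz ht).ne'
  have sq_ne : 1 - t ^ 2 ≠ 0 := by nlinarith [abs_le.1 ht]
  have num_eq : (z + t) / (1 + t * z) + -t = z * (1 - t ^ 2) / (1 + t * z) := by
    rw [eq_div_iff den_ne, add_mul, div_mul_cancel₀ _ den_ne]
    ring
  have den_eq : 1 + -t * ((z + t) / (1 + t * z)) = (1 - t ^ 2) / (1 + t * z) := by
    field_simp
    ring
  rw [mobius, mobius, num_eq, den_eq, div_div_div_cancel_right₀ den_ne,
    mul_div_cancel_right₀ _ sq_ne]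

theorem abs_mobiusDeriv_le_four (ht : |t| ≤ 1) (htz : |t * z| ≤ 1 / 2) :
    |mobiusDeriv z t| ≤ 4 := by
  have den_ge : 1 / 2 ≤ 1 + t * z := by linarith [(abs_le.1 htz).1]
  have sq_le : t ^ 2 ≤ 1 := (sq_le_one_iff_abs_le_one t).2 ht
  rw [mobiusDeriv, abs_of_nonneg (div_nonneg (by linarith) (sq_nonneg _)),
    div_le_iff₀ (by positivity)]
  nlinarith

theorem one_third_le_mobiusDeriv (hz : |z| ≤ 1) (ht : |t| ≤ 1 / 2) :
    1 / 3 ≤ mobiusDeriv z t := by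
  have den_pos := one_add_mul_pos hz ht
  have den_le : 1 + t * z ≤ 3 / 2 := by linarith [(abs_le.1 (abs_mul_le_half hz ht)).2]
  rw [mobiusDeriv, le_div_iff₀ (by positivity)]
  nlinarith [abs_le.1 ht]

section Composition

variable {E : Type*} {α β : E → ℝ} {s : Set E}

theorem continuousOn_mobius [TopologicalSpace E] (hα : ContinuousOn α s) (hβ : ContinuousOn β s)
    (hα_le : ∀ p ∈ s, |α p| ≤ 1) (hβ_le : ∀ p ∈ s, |β p| ≤ 1 / 2) :
    ContinuousOn (fun p => mobius (α p) (β p)) s :=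
  (hα.add hβ).div (continuousOn_const.add (hβ.mul hα)) fun p hp =>
    (one_add_mul_pos (hα_le p hp) (hβ_le p hp)).ne'

variable [NormedAddCommGroup E] [NormedSpace ℝ E]

theorem contDiffOn_mobius {k : WithTop ℕ∞} (hα : ContDiffOn ℝ k α s) (hβ : ContDiffOn ℝ k β s)
    (hα_le : ∀ p ∈ s, |α p| ≤ 1) (hβ_le : ∀ p ∈ s, |β p| ≤ 1 / 2) :
    ContDiffOn ℝ k (fun p => mobius (α p) (β p)) s :=
  (hα.add hβ).div (contDiffOn_const.add (hβ.mul hα)) fun p hp =>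
    (one_add_mul_pos (hα_le p hp) (hβ_le p hp)).ne'

theorem hasFDerivAt_mobius {α' β' : E →L[ℝ] ℝ} {p : E} (hα : HasFDerivAt α α' p)
    (hβ : HasFDerivAt β β' p) (hα_le : |α p| ≤ 1) (hβ_le : |β p| ≤ 1 / 2) :
    HasFDerivAt (fun q => mobius (α q) (β q))
      (mobiusDeriv (α p) (β p) • α' + mobiusDeriv (β p) (α p) • β') p := by
  have den_ne : 1 + β p * α p ≠ 0 := (one_add_mul_pos hα_le hβ_le).ne'
  have inv_den : HasFDerivAt (fun q => (1 + β q * α q)⁻¹)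
      (-((1 + β p * α p) ^ 2)⁻¹ • (β p • α' + α p • β')) p :=
    (hasDerivAt_inv den_ne).comp_hasFDerivAt p ((hβ.mul hα).const_add 1)
  refine ((hα.add hβ).mul inv_den).congr_fderiv ?_
  ext w
  simp only [Pi.add_apply, smul_add, neg_smul, smul_neg, add_apply, neg_apply, smul_apply,
    smul_eq_mul, mobiusDeriv]
  field_simp
  ring

end Composition

end Mobius

/-! ### Stretching one coordinate, then shearing another -/

/-- Profiles `v (x, y)` of admissible shears. The derivative in the first variable may blow up like
`y⁻²` at the line `y = 0`, which is the rate compensated by the derivative `(3 * y ^ 2)⁻¹` of the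
cube root at `y ^ 3`. -/
structure IsShearProfile (v : ℝ × ℝ → ℝ) (C : ℝ) : Prop where
  continuous : Continuous v
  abs_le_half : ∀ q, |v q| ≤ 1 / 2
  contDiffAt : ∀ q, q.2 ≠ 0 → ContDiffAt ℝ 1 v q
  abs_fderiv_le : ∀ q, q.2 ≠ 0 → ∀ w, |fderiv ℝ v q w| ≤ C * (|w.1| / q.2 ^ 2 + |w.2|)

theorem IsShearProfile.nonneg {v : ℝ × ℝ → ℝ} {C : ℝ} (hv : IsShearProfile v C) : 0 ≤ C := by
  have h := (abs_nonneg _).trans (hv.abs_fderiv_le (0, 1) one_ne_zero (0, 1))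
  simpa using h

section StretchShear

variable {n : ℕ} {a b c : Fin n}

theorem isHomeoOn_updateCoord_cbrt (b : Fin n) :
    IsHomeoOn (updateCoord b fun p => cbrt (p b)) (updateCoord b fun p => p b ^ 3)
      (closedSymCube n) (closedSymCube n) := by
  refine isHomeoOn_updateCoord (by fun_prop) (by fun_prop)
    (fun p hp => abs_cbrt_le_one (mem_closedSymCube_iff.1 hp b)) (fun p hp => ?_)
    (fun p _ => ?_) (fun p _ => ?_)
  · rw [abs_pow]
    exact pow_le_one₀ (abs_nonneg _) (mem_closedSymCube_iff.1 hp b)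
  · rw [updateCoord_apply_self, cbrt_pow]
  · rw [updateCoord_apply_self, cbrt_cube]

theorem isHomeoOn_updateCoord_mobius {t : En n → ℝ} (ht : ContinuousOn t (closedSymCube n))
    (ht_le : ∀ p ∈ closedSymCube n, |t p| ≤ 1 / 2)
    (ht_c : ∀ u p, t (updateCoord c u p) = t p) :
    IsHomeoOn (updateCoord c fun p => mobius (p c) (-t p))
      (updateCoord c fun p => mobius (p c) (t p)) (closedSymCube n) (closedSymCube n) := by
  have z_le (p) (hp : p ∈ closedSymCube n) : |p c| ≤ 1 := mem_closedSymCube_iff.1 hp c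
  have neg_t_le (p) (hp : p ∈ closedSymCube n) : |-t p| ≤ 1 / 2 := (abs_neg _).trans_le (ht_le p hp)
  refine isHomeoOn_updateCoord (continuousOn_mobius (by fun_prop) ht.neg z_le neg_t_le)
    (continuousOn_mobius (by fun_prop) ht z_le ht_le)
    (fun p hp => abs_mobius_le_one (z_le p hp) (neg_t_le p hp))
    (fun p hp => abs_mobius_le_one (z_le p hp) (ht_le p hp)) (fun p hp => ?_) (fun p hp => ?_)
  · rw [updateCoord_apply_self, ht_c]
    simpa only [neg_neg] using mobius_mobius_neg (z_le p hp) (neg_t_le p hp)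
  · rw [updateCoord_apply_self, ht_c]
    exact mobius_mobius_neg (z_le p hp) (ht_le p hp)

/-- The homeomorphism of the theorem: take the cube root of the `b`-th coordinate, then apply to the
`c`-th one the Möbius map whose parameter is `-v`, evaluated at the coordinates `a` and `b`. -/
def stretchShear (a b c : Fin n) (v : ℝ × ℝ → ℝ) : En n → En n :=
  updateCoord c (fun p => mobius (p c) (-v (p a, p b))) ∘ updateCoord b fun p => cbrt (p b)

/-- The inverse of `stretchShear a b c v` on the closed cube. -/
def stretchShearInv (a b c : Fin n) (v : ℝ × ℝ → ℝ) : En n → En n :=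
  updateCoord b (fun p => p b ^ 3) ∘ updateCoord c fun p => mobius (p c) (v (p a, p b))

theorem isHomeoOn_stretchShear (hac : a ≠ c) (hbc : b ≠ c) {v : ℝ × ℝ → ℝ} {C : ℝ}
    (hv : IsShearProfile v C) :
    IsHomeoOn (stretchShear a b c v) (stretchShearInv a b c v)
      (closedSymCube n) (closedSymCube n) := by
  refine (isHomeoOn_updateCoord_mobius (t := fun p => v (p a, p b)) ?_ (fun p _ => hv.abs_le_half _)
    fun u p => ?_).comp (isHomeoOn_updateCoord_cbrt b)
  · exact (hv.continuous.comp (by fun_prop)).continuousOn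
  · simp only [updateCoord_apply_of_ne _ _ hac, updateCoord_apply_of_ne _ _ hbc]

/-- The projection of `ℝⁿ` onto the coordinates `a` and `b`. -/
def coordPairL (a b : Fin n) : En n →L[ℝ] ℝ × ℝ :=
  (EuclideanSpace.proj a).prod (EuclideanSpace.proj b)

theorem coordPairL_apply (p : En n) : coordPairL a b p = (p a, p b) :=
  rfl

theorem hasFDerivAt_mobius_comp_coordPairL {τ : ℝ × ℝ → ℝ} {p : En n} (hp : |p c| ≤ 1)
    (hτ_le : |τ (p a, p b)| ≤ 1 / 2) (hτ : DifferentiableAt ℝ τ (p a, p b)) :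
    HasFDerivAt (fun q => mobius (q c) (τ (q a, q b)))
      (mobiusDeriv (p c) (τ (p a, p b)) • EuclideanSpace.proj c +
        mobiusDeriv (τ (p a, p b)) (p c) • (fderiv ℝ τ (p a, p b)).comp (coordPairL a b)) p :=
  hasFDerivAt_mobius (EuclideanSpace.proj (𝕜 := ℝ) c).hasFDerivAt
    (HasFDerivAt.comp (f := coordPairL a b) p hτ.hasFDerivAt (coordPairL a b).hasFDerivAt) hp hτ_le

theorem det_updateCoordL_comp (ℓ : En n →L[ℝ] ℝ) (d : ℝ) :
    ((updateCoordL c ℓ).comp (updateCoordL b (d • EuclideanSpace.proj b))).det =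
      ℓ (EuclideanSpace.single c 1) * d :=
  calc _ = (updateCoordL c ℓ).det * (updateCoordL b (d • EuclideanSpace.proj b)).det :=
        LinearMap.det_comp _ _
    _ = _ := by simp [det_updateCoordL]

theorem norm_updateCoordL_comp_le (hab : a ≠ b) (hbc : b ≠ c) {ℓ : En n →L[ℝ] ℝ} {d N : ℝ}
    (hd : 1 / 3 ≤ d) (hN : 0 ≤ N) (hℓ : ∀ w, |ℓ w| ≤ N * (d * |w a| + |w b| + |w c|)) :
    ‖(updateCoordL c ℓ).comp (updateCoordL b (d • EuclideanSpace.proj b))‖ ≤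
      (4 + 5 * N) * d := by
  refine ContinuousLinearMap.opNorm_le_bound _ (by positivity) fun w => ?_
  have coord_le (j : Fin n) : |w j| ≤ ‖w‖ := PiLp.norm_apply_le w j
  set w' := updateCoord b (d • EuclideanSpace.proj b : En n →L[ℝ] ℝ) w with hw'
  have w'_b : |w' b| = d * |w b| := by
    rw [hw', updateCoord_apply_self, smul_apply, smul_eq_mul, abs_mul,
      abs_of_nonneg (by linarith : 0 ≤ d)]
    rfl
  have w'_a : w' a = w a := updateCoord_apply_of_ne _ _ hab
  have w'_c : w' c = w c := updateCoord_apply_of_ne _ _ hbc.symm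
  calc ‖updateCoord c ℓ w'‖ ≤ ‖w'‖ + |ℓ w'| := norm_updateCoord_le _ _
    _ ≤ (‖w‖ + d * |w b|) + N * (d * |w a| + d * |w b| + |w c|) := by
        refine add_le_add ((norm_updateCoord_le _ _).trans_eq ?_) ((hℓ w').trans_eq ?_)
        · rw [← w'_b, hw', updateCoord_apply_self]
        · rw [w'_a, w'_b, w'_c]
    _ ≤ (‖w‖ + d * ‖w‖) + N * (d * ‖w‖ + d * ‖w‖ + ‖w‖) := by gcongr <;> exact coord_le _
    _ ≤ (3 * d * ‖w‖ + d * ‖w‖) + N * (d * ‖w‖ + d * ‖w‖ + 3 * d * ‖w‖) := by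
        have norm_le : ‖w‖ ≤ 3 * d * ‖w‖ := le_mul_of_one_le_left (norm_nonneg w) (by linarith)
        gcongr
    _ = (4 + 5 * N) * d * ‖w‖ := by ring

theorem exists_hasFDerivAt_mobius_neg (hac : a ≠ c) (hbc : b ≠ c)
    {v : ℝ × ℝ → ℝ} {C : ℝ} (hv : IsShearProfile v C) {p : En n} (hp : |p c| ≤ 1) (hpb : p b ≠ 0) :
    ∃ ℓ : En n →L[ℝ] ℝ, HasFDerivAt (fun q => mobius (q c) (-v (q a, q b))) ℓ p ∧
      1 / 3 ≤ ℓ (EuclideanSpace.single c 1) ∧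
      ∀ w, |ℓ w| ≤ (4 + 12 * C) * ((3 * p b ^ 2)⁻¹ * |w a| + |w b| + |w c|) := by
  set t := -v (p a, p b)
  have t_le : |t| ≤ 1 / 2 := (abs_neg _).trans_le (hv.abs_le_half _)
  have v_diff : DifferentiableAt ℝ v (p a, p b) :=
    (hv.contDiffAt (p a, p b) hpb).differentiableAt one_ne_zero
  refine ⟨_, hasFDerivAt_mobius_comp_coordPairL (τ := -v) hp t_le v_diff.neg, ?_, fun w => ?_⟩
  · simpa [coordPairL_apply, hac, hbc, ← Prod.zero_eq_mk] using one_third_le_mobiusDeriv hp t_le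
  have C_nonneg := hv.nonneg
  have tz_le := abs_mul_le_half hp t_le
  have dz_le : |mobiusDeriv (p c) t| ≤ 4 := abs_mobiusDeriv_le_four (by linarith) tz_le
  have dt_le : |mobiusDeriv t (p c)| ≤ 4 := abs_mobiusDeriv_le_four hp (by rwa [mul_comm])
  calc |mobiusDeriv (p c) t * w c + mobiusDeriv t (p c) * fderiv ℝ (-v) (p a, p b) (w a, w b)|
      ≤ |mobiusDeriv (p c) t| * |w c| +
        |mobiusDeriv t (p c)| * |fderiv ℝ v (p a, p b) (w a, w b)| := by
        refine (abs_add_le _ _).trans_eq ?_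
        rw [abs_mul, abs_mul, fderiv_neg, neg_apply, abs_neg]
    _ ≤ 4 * |w c| + 4 * (C * (|w a| / p b ^ 2 + |w b|)) := by
        gcongr
        exact hv.abs_fderiv_le _ hpb _
    _ = 4 * |w c| + 12 * C * ((3 * p b ^ 2)⁻¹ * |w a|) + 4 * C * |w b| := by
        field_simp
        ring
    _ ≤ (4 + 12 * C) * ((3 * p b ^ 2)⁻¹ * |w a| + |w b| + |w c|) := by
        have : 0 ≤ (3 * p b ^ 2)⁻¹ * |w a| := by positivity
        nlinarith [abs_nonneg (w b), abs_nonneg (w c), mul_nonneg C_nonneg (abs_nonneg (w b)),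
          mul_nonneg C_nonneg (abs_nonneg (w c))]

theorem exists_frobNorm_jacobian_stretchShear_le (hab : a ≠ b) (hac : a ≠ c) (hbc : b ≠ c)
    {v : ℝ × ℝ → ℝ} {C : ℝ} (hv : IsShearProfile v C) :
    ∃ K > 0, ∀ p ∈ closedSymCube n, p b ≠ 0 → DifferentiableAt ℝ (stretchShear a b c v) p ∧
      frobNorm (jacobian (stretchShear a b c v) p) ≤
        K * |(fderiv ℝ (stretchShear a b c v) p).det| := by
  have n_pos : (0 : ℝ) < n := mod_cast b.pos
  have C_nonneg := hv.nonneg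
  refine ⟨n * (3 * (4 + 5 * (4 + 12 * C))), by positivity, fun p hp hpb => ?_⟩
  set q := updateCoord b (fun p => cbrt (p b)) p
  have q_b : q b = cbrt (p b) := updateCoord_apply_self _ _
  have q_mem : q ∈ closedSymCube n := (isHomeoOn_updateCoord_cbrt b).2.2.1 hp
  rw [mem_closedSymCube_iff] at q_mem
  have qb_ne : q b ≠ 0 := q_b ▸ cbrt_ne_zero hpb
  obtain ⟨ℓ, shear_deriv, ℓ_c, ℓ_le⟩ := exists_hasFDerivAt_mobius_neg hac hbc hv (q_mem c) qb_ne
  have cbrt_deriv : HasFDerivAt (fun p : En n => cbrt (p b))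
      ((3 * q b ^ 2)⁻¹ • EuclideanSpace.proj (𝕜 := ℝ) b) p := by
    rw [q_b]
    exact (hasDerivAt_cbrt hpb).comp_hasFDerivAt p (EuclideanSpace.proj (𝕜 := ℝ) b).hasFDerivAt
  have deriv := (hasFDerivAt_updateCoord (c := c) shear_deriv).comp p
    (hasFDerivAt_updateCoord cbrt_deriv)
  refine ⟨deriv.differentiableAt, (frobNorm_jacobian_le _ _).trans ?_⟩
  rw [mul_assoc (n : ℝ)]
  gcongr
  rw [show fderiv ℝ (stretchShear a b c v) p = _ from deriv.fderiv, det_updateCoordL_comp]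
  set d := (3 * q b ^ 2)⁻¹
  have d_ge : 1 / 3 ≤ d := one_third_le_inv_three_mul_sq qb_ne (q_mem b)
  calc _ ≤ (4 + 5 * (4 + 12 * C)) * d :=
        norm_updateCoordL_comp_le hab hbc d_ge (by positivity) ℓ_le
    _ = 3 * (4 + 5 * (4 + 12 * C)) * (1 / 3 * d) := by ring
    _ ≤ 3 * (4 + 5 * (4 + 12 * C)) * |ℓ (EuclideanSpace.single c 1) * d| := by
        gcongr
        exact (mul_le_mul_of_nonneg_right ℓ_c (by linarith)).trans (le_abs_self _)

theorem IsShearProfile.ae_eq_of_isWeakDerivOn_stretchShearInv (hab : a ≠ b) (hac : a ≠ c)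
    (hbc : b ≠ c) {v : ℝ × ℝ → ℝ} {C : ℝ} (hv : IsShearProfile v C)
    {Dg : En n → Fin n → Fin n → ℝ} (hDg : LocallyIntegrableOn Dg (openSymCube n))
    (h : IsWeakDerivOn (openSymCube n) (stretchShearInv a b c v) Dg) :
    ∀ᵐ p : En n, p ∈ openSymCube n →
      Dg p c a = mobiusDeriv (v (p a, p b)) (p c) * fderiv ℝ v (p a, p b) (1, 0) := by
  have g_eq : (fun p => stretchShearInv a b c v p c) = fun p => mobius (p c) (v (p a, p b)) := by
    funext p
    rw [stretchShearInv, Function.comp, updateCoord_apply_of_ne _ _ hbc.symm,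
      updateCoord_apply_self]
  set U : Set (En n) := openSymCube n ∩ {p | p b ≠ 0}
  have hU : IsOpen U := isOpen_openSymCube.inter (isOpen_ne_fun (by fun_prop) continuous_const)
  have z_le (p) (hp : p ∈ openSymCube n) : |p c| ≤ 1 :=
    mem_closedSymCube_iff.1 (openSymCube_subset_closedSymCube hp) c
  have g_contDiff : ContDiffOn ℝ 1 (fun p => stretchShearInv a b c v p c) U := by
    rw [g_eq]
    refine contDiffOn_mobius (EuclideanSpace.proj (𝕜 := ℝ) c).contDiff.contDiffOn
      (fun p hp => ?_) (fun p hp => z_le p hp.1) (fun p _ => hv.abs_le_half _)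
    exact ((hv.contDiffAt (p a, p b) hp.2).comp p
      (coordPairL a b).contDiff.contDiffAt).contDiffWithinAt
  have Dg_ca : LocallyIntegrableOn (fun p => Dg p c a) U := fun p hp =>
    let ⟨s, hs, hi⟩ := hDg.mono_set inter_subset_left p hp
    ⟨s, hs, (hi.eval c).eval a⟩
  filter_upwards [(h.mono inter_subset_left).ae_eq_fderiv hU Dg_ca g_contDiff,
    ae_apply_notMem b (countable_singleton 0)] with p hp hpb hpΩ
  have v_diff : DifferentiableAt ℝ v (p a, p b) :=
    (hv.contDiffAt (p a, p b) hpb).differentiableAt one_ne_zero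
  rw [hp ⟨hpΩ, hpb⟩, g_eq,
    (hasFDerivAt_mobius_comp_coordPairL (z_le p hpΩ) (hv.abs_le_half _) v_diff).fderiv]
  simp [coordPairL_apply, hab.symm, hac.symm]

theorem IsShearProfile.integrableOn_of_isWeakDerivOn_stretchShearInv (hab : a ≠ b) (hac : a ≠ c)
    (hbc : b ≠ c) {v : ℝ × ℝ → ℝ} {C : ℝ} (hv : IsShearProfile v C)
    {Dg : En n → Fin n → Fin n → ℝ} (hDg : LocallyIntegrableOn Dg (openSymCube n))
    (h : IsWeakDerivOn (openSymCube n) (stretchShearInv a b c v) Dg) :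
    IntegrableOn (fun p : En n => fderiv ℝ v (p a, p b) (1, 0))
      (box fun _ => Icc (-1 / 2) (1 / 2)) := by
  have box_subset : box (fun _ : Fin n => Icc (-1 / 2 : ℝ) (1 / 2)) ⊆ openSymCube n :=
    box_mono fun _ => Icc_subset_Ioo (by norm_num) (by norm_num)
  have box_cpt : IsCompact (box fun _ : Fin n => Icc (-1 / 2 : ℝ) (1 / 2)) :=
    isCompact_box fun _ => isCompact_Icc
  have Dg_int := hDg.integrableOn_compact_subset box_subset box_cpt
  refine (((Dg_int.eval c).eval a).const_mul 3).mono ?_ ?_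
  · exact ((measurable_fderiv_apply_const ℝ v (1, 0)).comp
      (by fun_prop : Measurable fun p : En n => (p a, p b))).aestronglyMeasurable
  filter_upwards [ae_restrict_of_ae (hv.ae_eq_of_isWeakDerivOn_stretchShearInv hab hac hbc hDg h),
    ae_restrict_mem box_cpt.measurableSet] with p hp hp_mem
  have z_le : |p c| ≤ 1 / 2 := abs_le.2 ⟨by linarith [(hp_mem c).1], (hp_mem c).2⟩
  have t_le : |v (p a, p b)| ≤ 1 := (hv.abs_le_half _).trans (by norm_num)
  have factor_ge := one_third_le_mobiusDeriv t_le z_le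
  rw [hp (box_subset hp_mem), norm_mul, norm_mul, Real.norm_ofNat,
    Real.norm_of_nonneg (show 0 ≤ mobiusDeriv _ _ by linarith)]
  nlinarith [norm_nonneg (fderiv ℝ v (p a, p b) (1, 0))]

end StretchShear

/-! ### The oscillating profile -/

/-- A bump function equal to `1` on `[11/8, 13/8]` and supported in `[5/4, 7/4]`, so that its dyadic
dilations have disjoint supports. -/
def dyadicBump : ContDiffBump (3 / 2 : ℝ) := ⟨1 / 8, 1 / 4, by norm_num, by norm_num⟩

/-- The `k`-th wave, at heights `y` of about `2 ^ (-k)`: its amplitude `2 ^ (-k) / 4` is summable,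
while its frequency is so large that its `x`-derivative is of the order `4 ^ k`, that is, `y⁻²`. -/
def shearWave (k : ℕ) (q : ℝ × ℝ) : ℝ :=
  1 / 4 * (1 / 2) ^ k * (dyadicBump (2 ^ k * q.2) * Real.sin (8 ^ k * q.1))

/-- The shear profile superposing all the waves; it vanishes for `y ≤ 0`. -/
def oscillatingProfile (q : ℝ × ℝ) : ℝ := ∑' k, shearWave k q

theorem dyadicBump_eq_zero {x : ℝ} (hx : x ≤ 5 / 4 ∨ 7 / 4 ≤ x) : dyadicBump x = 0 := by
  refine dyadicBump.zero_of_le_dist ?_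
  change 1 / 4 ≤ |x - 3 / 2|
  rcases hx with hx | hx
  · exact le_trans (by linarith) (neg_le_abs _)
  · exact le_trans (by linarith) (le_abs_self _)

theorem dyadicBump_eq_one {x : ℝ} (hx : 11 / 8 ≤ x) (hx' : x ≤ 13 / 8) : dyadicBump x = 1 :=
  dyadicBump.one_of_mem_closedBall (by
    rw [Real.closedBall_eq_Icc]
    change x ∈ Icc (3 / 2 - 1 / 8 : ℝ) (3 / 2 + 1 / 8)
    constructor <;> linarith)

theorem dyadicBump_mul_sq_le (x : ℝ) : dyadicBump x * x ^ 2 ≤ 4 := by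
  rcases le_or_gt x (5 / 4) with hx | hx
  · simp [dyadicBump_eq_zero (.inl hx)]
  rcases le_or_gt (7 / 4) x with hx' | hx'
  · simp [dyadicBump_eq_zero (.inr hx')]
  nlinarith [dyadicBump.le_one (x := x), dyadicBump.nonneg (x := x)]

theorem exists_abs_deriv_dyadicBump_le : ∃ B, ∀ x, |deriv dyadicBump x| ≤ B :=
  dyadicBump.hasCompactSupport.deriv.exists_bound_of_continuous
    (dyadicBump.contDiff.continuous_deriv le_rfl)

theorem abs_shearWave_le (k : ℕ) (q : ℝ × ℝ) : |shearWave k q| ≤ 1 / 4 * (1 / 2) ^ k := by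
  rw [shearWave, abs_mul, abs_of_pos (by positivity)]
  refine mul_le_of_le_one_right (by positivity) ?_
  rw [abs_mul, abs_of_nonneg dyadicBump.nonneg]
  exact mul_le_one₀ dyadicBump.le_one (abs_nonneg _) (Real.abs_sin_le_one _)

theorem hasSum_shearWave_bound : HasSum (fun k : ℕ => 1 / 4 * (1 / 2 : ℝ) ^ k) (1 / 2) := by
  have geometric := hasSum_geometric_two.mul_left (1 / 4 : ℝ)
  rwa [show (1 / 4 : ℝ) * 2 = 1 / 2 by norm_num] at geometric

theorem contDiff_shearWave (k : ℕ) : ContDiff ℝ 1 (shearWave k) := by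
  unfold shearWave
  exact contDiff_const.mul ((dyadicBump.contDiff.comp (by fun_prop)).mul (by fun_prop))

theorem continuous_oscillatingProfile : Continuous oscillatingProfile :=
  continuous_tsum (fun k => (contDiff_shearWave k).continuous) hasSum_shearWave_bound.summable
    abs_shearWave_le

theorem abs_oscillatingProfile_le (q : ℝ × ℝ) : |oscillatingProfile q| ≤ 1 / 2 :=
  tsum_of_norm_bounded (f := fun k => shearWave k q) hasSum_shearWave_bound
    fun k => abs_shearWave_le k q

theorem oscillatingProfile_eq_shearWave {k : ℕ} {q : ℝ × ℝ}
    (h : ∀ m ≠ k, dyadicBump (2 ^ m * q.2) = 0) : oscillatingProfile q = shearWave k q :=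
  tsum_eq_single k fun m hm => by rw [shearWave, h m hm, zero_mul, mul_zero]

theorem oscillatingProfile_eventuallyEq {k : ℕ} {q : ℝ × ℝ} (hq : 7 / 8 < 2 ^ k * q.2)
    (hq' : k = 0 ∨ 2 ^ k * q.2 < 5 / 2) : oscillatingProfile =ᶠ[𝓝 q] shearWave k := by
  have near : ∀ᶠ q' : ℝ × ℝ in 𝓝 q, 7 / 8 < 2 ^ k * q'.2 ∧ (k = 0 ∨ 2 ^ k * q'.2 < 5 / 2) := by
    have scale_cont : Continuous fun q' : ℝ × ℝ => 2 ^ k * q'.2 := by fun_prop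
    refine (scale_cont.continuousAt.eventually_const_lt hq).and ?_
    rcases hq' with rfl | hq'
    · exact .of_forall fun _ => .inl rfl
    · exact (scale_cont.continuousAt.eventually_lt_const hq').mono fun _ => .inr
  filter_upwards [near] with q' ⟨lower, upper⟩
  refine oscillatingProfile_eq_shearWave fun m hm => dyadicBump_eq_zero ?_
  have y_pos : 0 < q'.2 := pos_of_mul_pos_right (by linarith : 0 < 2 ^ k * q'.2) (by positivity)
  rcases hm.lt_or_gt with hm | hm
  · have pow_le : (2 : ℝ) ^ (m + 1) ≤ 2 ^ k := pow_le_pow_right₀ one_le_two hm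
    rw [pow_succ] at pow_le
    left
    nlinarith [upper.resolve_left (by omega)]
  · have pow_le : (2 : ℝ) ^ (k + 1) ≤ 2 ^ m := pow_le_pow_right₀ one_le_two hm
    rw [pow_succ] at pow_le
    right
    nlinarith

theorem exists_oscillatingProfile_eventuallyEq {q : ℝ × ℝ} (hq : q.2 ≠ 0) :
    ∃ k, oscillatingProfile =ᶠ[𝓝 q] shearWave k := by
  rcases hq.lt_or_gt with neg | pos
  · refine ⟨0, ?_⟩
    filter_upwards [continuous_snd.continuousAt.eventually_lt_const neg] with q' hq'
    refine oscillatingProfile_eq_shearWave fun m _ => dyadicBump_eq_zero (.inl ?_)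
    have := mul_neg_of_pos_of_neg (by positivity : (0 : ℝ) < 2 ^ m) hq'
    linarith
  rcases le_or_gt 1 q.2 with one_le | lt_one
  · exact ⟨0, oscillatingProfile_eventuallyEq (by linarith) (.inl rfl)⟩
  obtain ⟨k, pow_le, lt_pow⟩ := exists_nat_pow_near ((one_le_inv₀ pos).2 lt_one.le) one_lt_two
  rw [inv_eq_one_div, le_div_iff₀ pos] at pow_le
  rw [inv_eq_one_div, div_lt_iff₀ pos] at lt_pow
  refine ⟨k + 1, oscillatingProfile_eventuallyEq (by linarith) (.inr ?_)⟩
  rw [pow_succ]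
  linarith

theorem fderiv_shearWave_apply (k : ℕ) (q w : ℝ × ℝ) :
    fderiv ℝ (shearWave k) q w =
      1 / 4 * (4 ^ k * dyadicBump (2 ^ k * q.2) * Real.cos (8 ^ k * q.1) * w.1 +
        deriv dyadicBump (2 ^ k * q.2) * Real.sin (8 ^ k * q.1) * w.2) := by
  have bump_deriv : HasFDerivAt (fun q : ℝ × ℝ => dyadicBump (2 ^ k * q.2))
      (deriv dyadicBump (2 ^ k * q.2) • (2 : ℝ) ^ k • ContinuousLinearMap.snd ℝ ℝ ℝ) q :=
    (dyadicBump.contDiff.differentiable one_ne_zero _).hasDerivAt.comp_hasFDerivAt q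
      (hasFDerivAt_snd.const_mul _)
  have sin_deriv : HasFDerivAt (fun q : ℝ × ℝ => Real.sin (8 ^ k * q.1))
      (Real.cos (8 ^ k * q.1) • (8 : ℝ) ^ k • ContinuousLinearMap.fst ℝ ℝ ℝ) q :=
    (hasFDerivAt_fst.const_mul _).sin
  have freq : (8 : ℝ) ^ k = 2 ^ k * 4 ^ k := by rw [← mul_pow]; norm_num
  have amp : (1 / 2 : ℝ) ^ k * 2 ^ k = 1 := by rw [← mul_pow]; norm_num
  rw [show fderiv ℝ (shearWave k) q = _ from
    ((bump_deriv.mul sin_deriv).const_mul (1 / 4 * (1 / 2) ^ k)).fderiv]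
  simp only [add_apply, smul_apply, ContinuousLinearMap.coe_fst', ContinuousLinearMap.coe_snd',
    smul_eq_mul, freq]
  linear_combination (1 / 4 *
    (4 ^ k * dyadicBump (2 ^ k * q.2) * Real.cos (2 ^ k * 4 ^ k * q.1) * w.1 +
      deriv dyadicBump (2 ^ k * q.2) * Real.sin (2 ^ k * 4 ^ k * q.1) * w.2)) * amp

theorem abs_fderiv_shearWave_le {B : ℝ} (hB : ∀ x, |deriv dyadicBump x| ≤ B) (k : ℕ)
    {q : ℝ × ℝ} (hq : q.2 ≠ 0) (w : ℝ × ℝ) :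
    |fderiv ℝ (shearWave k) q w| ≤ (1 + B) * (|w.1| / q.2 ^ 2 + |w.2|) := by
  have B_nonneg : 0 ≤ B := (abs_nonneg _).trans (hB 0)
  have sq_pos : 0 < q.2 ^ 2 := by positivity
  set φ := dyadicBump (2 ^ k * q.2)
  set φ' := deriv dyadicBump (2 ^ k * q.2)
  have bump_nonneg : 0 ≤ 4 ^ k * φ := mul_nonneg (by positivity) dyadicBump.nonneg
  have bump_le : 4 ^ k * φ ≤ 4 / q.2 ^ 2 := by
    have key := dyadicBump_mul_sq_le (2 ^ k * q.2)
    rw [mul_pow, ← pow_mul, mul_comm k, pow_mul] at key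
    norm_num1 at key
    rw [le_div_iff₀ sq_pos]
    linarith
  have fst_le : |4 ^ k * φ * Real.cos (8 ^ k * q.1) * w.1| ≤ 4 / q.2 ^ 2 * |w.1| := by
    rw [abs_mul, abs_mul, abs_of_nonneg bump_nonneg]
    gcongr
    exact (mul_le_of_le_one_right bump_nonneg (Real.abs_cos_le_one _)).trans bump_le
  have snd_le : |φ' * Real.sin (8 ^ k * q.1) * w.2| ≤ B * |w.2| := by
    rw [abs_mul, abs_mul]
    gcongr
    exact (mul_le_of_le_one_right (abs_nonneg _) (Real.abs_sin_le_one _)).trans (hB _)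
  have fst_nonneg : 0 ≤ |w.1| / q.2 ^ 2 := by positivity
  calc |fderiv ℝ (shearWave k) q w|
      ≤ 1 / 4 * (4 / q.2 ^ 2 * |w.1| + B * |w.2|) := by
        rw [fderiv_shearWave_apply, abs_mul, abs_of_pos (by norm_num : (0 : ℝ) < 1 / 4)]
        gcongr
        exact (abs_add_le _ _).trans (add_le_add fst_le snd_le)
    _ = |w.1| / q.2 ^ 2 + B * |w.2| / 4 := by ring
    _ ≤ (1 + B) * (|w.1| / q.2 ^ 2 + |w.2|) := by
        nlinarith [mul_nonneg B_nonneg fst_nonneg, mul_nonneg B_nonneg (abs_nonneg w.2),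
          abs_nonneg w.2]

theorem exists_isShearProfile_oscillatingProfile : ∃ C, IsShearProfile oscillatingProfile C := by
  obtain ⟨B, hB⟩ := exists_abs_deriv_dyadicBump_le
  refine ⟨1 + B, continuous_oscillatingProfile, abs_oscillatingProfile_le, fun q hq => ?_,
    fun q hq w => ?_⟩ <;>
  obtain ⟨k, hk⟩ := exists_oscillatingProfile_eventuallyEq hq
  · exact (contDiff_shearWave k).contDiffAt.congr_of_eventuallyEq hk
  · rw [hk.fderiv_eq]
    exact abs_fderiv_shearWave_le hB k hq w

theorem fderiv_oscillatingProfile_apply {k : ℕ} {x y : ℝ} (hy : 11 / 8 < 2 ^ k * y)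
    (hy' : 2 ^ k * y < 13 / 8) :
    fderiv ℝ oscillatingProfile (x, y) (1, 0) = 4 ^ k / 4 * Real.cos (8 ^ k * x) := by
  have eq_wave : oscillatingProfile =ᶠ[𝓝 (x, y)] shearWave k :=
    oscillatingProfile_eventuallyEq (by simpa using hy.trans' (by norm_num))
      (.inr (by simpa using hy'.trans (by norm_num)))
  rw [eq_wave.fderiv_eq, fderiv_shearWave_apply, dyadicBump_eq_one hy.le hy'.le]
  ring

theorem quarter_le_setIntegral_cos_sq {M : ℝ} (hM : 2 ≤ M) :
    1 / 4 ≤ ∫ x in Ioo (-1 / 2 : ℝ) (1 / 2), Real.cos (M * x) ^ 2 := by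
  rw [← integral_Ioc_eq_integral_Ioo, ← intervalIntegral.integral_of_le (by norm_num),
    intervalIntegral.integral_comp_mul_left (fun x => Real.cos x ^ 2) (by positivity),
    integral_cos_sq, show M * (-1 / 2) = -(M * (1 / 2)) by ring, Real.cos_neg, Real.sin_neg,
    smul_eq_mul, inv_mul_eq_div, le_div_iff₀ (by positivity)]
  nlinarith [sq_nonneg (Real.cos (M * (1 / 2)) + Real.sin (M * (1 / 2))),
    Real.sin_sq_add_cos_sq (M * (1 / 2))]

section WaveBox

variable {n : ℕ} {a b : Fin n} {k : ℕ}

/-- The sides of the part of `[-1/2, 1/2]ⁿ` in which the `k`-th wave has its full amplitude. -/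
def waveBox (b : Fin n) (k : ℕ) : Fin n → Set ℝ :=
  Function.update (fun _ => Ioo (-1 / 2) (1 / 2)) b (Ioo (11 / 8 / 2 ^ k) (13 / 8 / 2 ^ k))

theorem waveBox_self : waveBox b k b = Ioo (11 / 8 / 2 ^ k) (13 / 8 / 2 ^ k) :=
  Function.update_self ..

theorem waveBox_of_ne {j : Fin n} (hj : j ≠ b) : waveBox b k j = Ioo (-1 / 2) (1 / 2) :=
  Function.update_of_ne hj ..

theorem isOpen_waveBox (b : Fin n) (k : ℕ) (j : Fin n) : IsOpen (waveBox b k j) := by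
  obtain rfl | hj := eq_or_ne j b
  · rw [waveBox_self]; exact isOpen_Ioo
  · rw [waveBox_of_ne hj]; exact isOpen_Ioo

theorem waveBox_subset (b : Fin n) (hk : 2 ≤ k) (j : Fin n) :
    waveBox b k j ⊆ Icc (-1 / 2) (1 / 2) := by
  obtain rfl | hj := eq_or_ne j b
  · have four_le : (2 : ℝ) ^ 2 ≤ 2 ^ k := pow_le_pow_right₀ one_le_two hk
    rw [waveBox_self]
    refine Ioo_subset_Icc_self.trans (Icc_subset_Icc ?_ ?_)
    · exact le_trans (by norm_num) (by positivity : (0 : ℝ) ≤ 11 / 8 / 2 ^ k)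
    · rw [div_le_iff₀ (by positivity)]
      linarith
  · rw [waveBox_of_ne hj]
    exact Ioo_subset_Icc_self

theorem prod_volume_real_waveBox (hab : a ≠ b) :
    ∏ j ∈ Finset.univ.erase a, volume.real (waveBox b k j) = 1 / 4 / 2 ^ k := by
  rw [Finset.prod_eq_single_of_mem b (Finset.mem_erase.2 ⟨hab.symm, Finset.mem_univ b⟩)
    fun j _ hj => by rw [waveBox_of_ne hj, Real.volume_real_Ioo]; norm_num,
    waveBox_self, Real.volume_real_Ioo_of_le (by gcongr; norm_num)]
  ring

theorem le_setIntegral_cos_sq_waveBox (hab : a ≠ b) (hk : 2 ≤ k) :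
    1 / 16 / 2 ^ k ≤ ∫ p in box (waveBox b k), Real.cos (8 ^ k * p a) ^ 2 := by
  have freq_ge : (2 : ℝ) ≤ 8 ^ k :=
    le_trans (by norm_num) (pow_le_pow_right₀ (by norm_num : (1 : ℝ) ≤ 8) hk)
  rw [setIntegral_box_apply a _ fun x => Real.cos (8 ^ k * x) ^ 2, waveBox_of_ne hab,
    prod_volume_real_waveBox hab]
  calc (1 : ℝ) / 16 / 2 ^ k = 1 / 4 * (1 / 4 / 2 ^ k) := by ring
    _ ≤ _ := by gcongr; exact quarter_le_setIntegral_cos_sq freq_ge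

theorem cos_sq_le_abs_fderiv_oscillatingProfile {p : En n} (hp : p b ∈ waveBox b k b) :
    4 ^ k / 4 * Real.cos (8 ^ k * p a) ^ 2 ≤ |fderiv ℝ oscillatingProfile (p a, p b) (1, 0)| := by
  rw [waveBox_self, mem_Ioo, div_lt_iff₀' (by positivity), lt_div_iff₀' (by positivity)] at hp
  rw [fderiv_oscillatingProfile_apply hp.1 hp.2, abs_mul,
    abs_of_pos (by positivity : (0 : ℝ) < 4 ^ k / 4), ← sq_abs]
  gcongr
  exact pow_le_of_le_one (abs_nonneg _) (Real.abs_cos_le_one _) two_ne_zero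

theorem not_integrableOn_fderiv_oscillatingProfile (hab : a ≠ b) :
    ¬ IntegrableOn (fun p : En n => fderiv ℝ oscillatingProfile (p a, p b) (1, 0))
      (box fun _ => Icc (-1 / 2) (1 / 2)) := by
  intro integrable
  obtain ⟨m, hm⟩ := pow_unbounded_of_one_lt (64 * ∫ p : En n in box fun _ => Icc (-1 / 2) (1 / 2),
    |fderiv ℝ oscillatingProfile (p a, p b) (1, 0)|) one_lt_two
  set k := m + 2
  have sub : box (waveBox b k) ⊆ box fun _ => Icc (-1 / 2) (1 / 2) :=
    box_mono (waveBox_subset b (by omega))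
  have cos_integrable :
      IntegrableOn (fun p : En n => 4 ^ k / 4 * Real.cos (8 ^ k * p a) ^ 2) (box (waveBox b k)) :=
    ((Continuous.continuousOn (by fun_prop)).integrableOn_compact
      (isCompact_box fun _ => isCompact_Icc)).mono_set sub
  have pow_le : (2 : ℝ) ^ m ≤ 2 ^ k := pow_le_pow_right₀ one_le_two (by omega)
  have : (2 : ℝ) ^ k / 64 ≤ ∫ p : En n in box fun _ => Icc (-1 / 2) (1 / 2),
      |fderiv ℝ oscillatingProfile (p a, p b) (1, 0)| :=
    calc (2 : ℝ) ^ k / 64 = 4 ^ k / 4 * (1 / 16 / 2 ^ k) := by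
          rw [show (4 : ℝ) = 2 * 2 by norm_num, mul_pow]
          field_simp
          norm_num
      _ ≤ 4 ^ k / 4 * ∫ p in box (waveBox b k), Real.cos (8 ^ k * p a) ^ 2 := by
          gcongr
          exact le_setIntegral_cos_sq_waveBox hab (by omega)
      _ = ∫ p in box (waveBox b k), 4 ^ k / 4 * Real.cos (8 ^ k * p a) ^ 2 :=
          (integral_const_mul _ _).symm
      _ ≤ ∫ p in box (waveBox b k), |fderiv ℝ oscillatingProfile (p a, p b) (1, 0)| :=
          setIntegral_mono_on cos_integrable (integrable.mono_set sub).abs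
            (isOpen_box (isOpen_waveBox b k)).measurableSet
            fun p hp => cos_sq_le_abs_fderiv_oscillatingProfile (hp b)
      _ ≤ _ := setIntegral_mono_set integrable.abs (.of_forall fun _ => abs_nonneg _)
          sub.eventuallyLE
  linarith

end WaveBox

/-- **Example (Statement 14).** For every `n ≥ 3` there is a homeomorphism `f` of
`[-1,1]ⁿ` onto itself, lying in `W^{1,1}((-1,1)ⁿ, ℝⁿ)`, with `|Df(x)| ≤ K·|J_f(x)|`
a.e. (hence `|Df|(f⁻¹(A)) ≤ K·Lⁿ(A)` for all Borel sets `A`), whose inverse is not a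
Sobolev mapping. -/
theorem exists_sobolev_homeo_with_nonsobolev_inverse (n : ℕ) (hn : 3 ≤ n) :
    ∃ f g : En n → En n,
      IsHomeoOn f g (closedSymCube n) (closedSymCube n) ∧
      (∃ Df : En n → Fin n → Fin n → ℝ,
        IntegrableOn f (openSymCube n) volume ∧
        IntegrableOn Df (openSymCube n) volume ∧
        IsWeakDerivOn (openSymCube n) f Df ∧
        ∃ K : ℝ, 0 < K ∧
          (∀ᵐ x ∂volume.restrict (openSymCube n),
            frobNorm (Df x) ≤ K * |Matrix.det (Matrix.of fun j i => Df x j i)|) ∧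
          (∀ A : Set (En n), MeasurableSet A →
            ∫⁻ x in f ⁻¹' A ∩ openSymCube n,
                ENNReal.ofReal (frobNorm (Df x)) ∂volume
              ≤ ENNReal.ofReal K * volume A)) ∧
      ¬ ∃ Dg : En n → Fin n → Fin n → ℝ,
          LocallyIntegrableOn Dg (openSymCube n) volume ∧
          IsWeakDerivOn (openSymCube n) g Dg := by
  let a : Fin n := ⟨0, by omega⟩
  let b : Fin n := ⟨1, by omega⟩
  let c : Fin n := ⟨2, by omega⟩
  have hab : a ≠ b := by simp [a, b]
  have hac : a ≠ c := by simp [a, c]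
  have hbc : b ≠ c := by simp [b, c]
  obtain ⟨C, hv⟩ := exists_isShearProfile_oscillatingProfile
  have homeo := isHomeoOn_stretchShear hac hbc hv
  obtain ⟨K, hK, bound⟩ := exists_frobNorm_jacobian_stretchShear_le hab hac hbc hv
  obtain ⟨Df, f_integrable, Df_integrable, weak, ae_bound, variation_le⟩ :=
    exists_isWeakDerivOn_of_frobNorm_jacobian_le homeo b (countable_singleton 0) bound
  refine ⟨stretchShear a b c oscillatingProfile, stretchShearInv a b c oscillatingProfile, homeo,
    ⟨Df, f_integrable, Df_integrable, weak, K, hK, ae_bound, variation_le⟩, ?_⟩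
  rintro ⟨Dg, Dg_integrable, inv_weak⟩
  exact not_integrableOn_fderiv_oscillatingProfile hab
    (hv.integrableOn_of_isWeakDerivOn_stretchShearInv hab hac hbc Dg_integrable inv_weak)
end
end
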